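/- arXiv:2407.20217 — 2 statements merged into one kernel-verified Lean document; each statement's English description precedes it below -/
import Mathlib

section
/- Let G ∈ G_{n,n+k} with n ≥ 1 and k ≥ 1. (a) G has a cubic weak distillation if and only if G has no vertex of degree 1. (b) G has a bridgeless cubic weak distillation if and only if G is bridgeless. -/
open Classical Finset

noncomputable section

/-- A finite multigraph: edges carry two (possibly equal) endpoints. -/
structure Multigraph where
  V : Type
  E : Type
  [fintV : Fintype V]
  [fintE : Fintype E]
  src : E → V
  tgt : E → V

attribute [instance] Multigraph.fintV Multigraph.fintE

namespace Multigraph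

variable (G : Multigraph)

/-- Number of vertices. -/
def nV : ℕ := Fintype.card G.V

/-- Number of edges (with multiplicity). -/
def nE : ℕ := Fintype.card G.E

/-- One step along an edge belonging to the edge set `S`. -/
def stepOn (S : Finset G.E) (u v : G.V) : Prop :=
  ∃ e ∈ S, (G.src e = u ∧ G.tgt e = v) ∨ (G.src e = v ∧ G.tgt e = u)

/-- The spanning subgraph with edge set `S` is connected. -/
def ConnOn (S : Finset G.E) : Prop :=
  ∀ u v : G.V, Relation.ReflTransGen (G.stepOn S) u v

/-- `G` is connected. -/
def Connected : Prop := G.ConnOn Finset.univ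

/-- The edge set `F` disconnects `G` (i.e. is a disconnection). -/
def Disconnects (F : Finset G.E) : Prop := ¬ G.ConnOn (Finset.univ \ F)

/-- `d i G`: the number of `i`-disconnections of `G`. -/
def d (i : ℕ) : ℕ :=
  ((Finset.univ : Finset (Finset G.E)).filter fun F => F.card = i ∧ G.Disconnects F).card

/-- The all-terminal reliability `R(G,p)`: each edge is independently retained with
probability `p`; this is the probability that the retained spanning subgraph is connected. -/
def rel (p : ℝ) : ℝ :=
  ∑ S : Finset G.E, if G.ConnOn S then p ^ S.card * (1 - p) ^ (G.nE - S.card) else 0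

/-- `e` is a bridge. -/
def IsBridge (e : G.E) : Prop := G.Disconnects {e}

def Bridgeless : Prop := ∀ e : G.E, ¬ G.IsBridge e

/-- The number of spanning trees of `G` (connected spanning subgraphs with `nV - 1` edges). -/
def treeCount : ℕ :=
  ((Finset.univ : Finset (Finset G.E)).filter fun S => S.card + 1 = G.nV ∧ G.ConnOn S).card

/-- The edge-connectivity: the least size of a disconnecting set of edges. -/
def edgeConnectivity : ℕ :=
  sInf {i : ℕ | ∃ F : Finset G.E, F.card = i ∧ G.Disconnects F}

/-- Degree of a vertex (a loop counts twice). -/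
def deg (v : G.V) : ℕ :=
  (Finset.univ.filter fun e => G.src e = v).card +
    (Finset.univ.filter fun e => G.tgt e = v).card

/-- The edges crossing the vertex set `A`. -/
def cutEdges (A : Finset G.V) : Finset G.E :=
  Finset.univ.filter fun e =>
    (G.src e ∈ A ∧ G.tgt e ∉ A) ∨ (G.src e ∉ A ∧ G.tgt e ∈ A)

/-- `F` is a cut: the set of edges crossing a nontrivial bipartition of the vertices. -/
def IsCut (F : Finset G.E) : Prop :=
  ∃ A : Finset G.V, A.Nonempty ∧ A ≠ Finset.univ ∧ F = G.cutEdges A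

/-- `F` is a bond: a minimal cut. -/
def IsBond (F : Finset G.E) : Prop :=
  G.IsCut F ∧ ∀ F' ⊆ F, G.IsCut F' → F' = F

/-- Number of `s`-bonds of `G`. -/
def bondCount (s : ℕ) : ℕ :=
  ((Finset.univ : Finset (Finset G.E)).filter fun F => F.card = s ∧ G.IsBond F).card

/-- Adjacency of vertices. -/
def Adj (u v : G.V) : Prop :=
  ∃ e : G.E, (G.src e = u ∧ G.tgt e = v) ∨ (G.src e = v ∧ G.tgt e = u)

/-- `G` is simple: no loops and no parallel edges. -/
def IsSimple : Prop :=
  (∀ e : G.E, G.src e ≠ G.tgt e) ∧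
    ∀ e f : G.E,
      ((G.src e = G.src f ∧ G.tgt e = G.tgt f) ∨ (G.src e = G.tgt f ∧ G.tgt e = G.src f)) →
        e = f

end Multigraph

/-- `G ∈ 𝒢_{n,m}`: connected with `n` vertices and `m` edges. -/
def memG (G : Multigraph) (n m : ℕ) : Prop :=
  G.nV = n ∧ G.nE = m ∧ G.Connected

/-- Isomorphism of multigraphs. -/
structure MGIso (G H : Multigraph) where
  vMap : G.V ≃ H.V
  eMap : G.E ≃ H.E
  ends_eq : ∀ e : G.E,
    (H.src (eMap e) = vMap (G.src e) ∧ H.tgt (eMap e) = vMap (G.tgt e)) ∨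
    (H.src (eMap e) = vMap (G.tgt e) ∧ H.tgt (eMap e) = vMap (G.src e))

def IsIso (G H : Multigraph) : Prop := Nonempty (MGIso G H)

/-- `G` is `p`-optimal in `𝒢_{n,m}`. -/
def pOptimal (G : Multigraph) (n m : ℕ) (p : ℝ) : Prop :=
  memG G n m ∧ ∀ H : Multigraph, memG H n m → H.rel p ≤ G.rel p

/-- `G` is uniquely optimal in `𝒢_{n,m}`: strictly more reliable than every
non-isomorphic member, for every `p ∈ (0,1)`. -/
def UniquelyOptimal (G : Multigraph) (n m : ℕ) : Prop :=
  memG G n m ∧ ∀ H : Multigraph, memG H n m → ¬ IsIso G H →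
    ∀ p : ℝ, 0 < p → p < 1 → H.rel p < G.rel p

noncomputable instance quotFintype {α : Type} [Fintype α] {r : α → α → Prop} :
    Fintype (Quot r) :=
  letI := Classical.decEq (Quot r)
  Fintype.ofSurjective (Quot.mk r) fun q => Quot.exists_rep q

/-- Identification of the endpoints of zero-weight edges. -/
def zeroRel (D : Multigraph) (w : D.E → ℕ) : D.V → D.V → Prop :=
  fun u v => ∃ e : D.E, w e = 0 ∧ D.src e = u ∧ D.tgt e = v

/-- The `j`-th node along the chain replacing the edge `e` (whose chain has `w e` edges). -/
def chainNode (D : Multigraph) (w : D.E → ℕ) (e : D.E) (j : ℕ) :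
    Quot (zeroRel D w) ⊕ (Σ f : D.E, Fin (w f - 1)) :=
  if h : 0 < j ∧ j < w e then Sum.inr ⟨e, ⟨j - 1, by omega⟩⟩
  else if j = 0 then Sum.inl (Quot.mk _ (D.src e))
  else Sum.inl (Quot.mk _ (D.tgt e))

/-- The weak subdivision of `D` determined by the chain lengths `w`: each edge `e` is
replaced by a chain with `w e` edges; zero-weight edges are contracted. -/
def subdivide (D : Multigraph) (w : D.E → ℕ) : Multigraph where
  V := Quot (zeroRel D w) ⊕ (Σ f : D.E, Fin (w f - 1))
  E := Σ f : D.E, Fin (w f)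
  src f := chainNode D w f.1 f.2.val
  tgt f := chainNode D w f.1 (f.2.val + 1)

/-- The zero-weight edges contain no cycle (no "zero cycle"): they form a forest. -/
def ZeroAcyclic (D : Multigraph) (w : D.E → ℕ) : Prop :=
  Fintype.card (Quot (zeroRel D w)) +
      (Finset.univ.filter fun e : D.E => w e = 0).card = Fintype.card D.V

/-- `G` is a weak subdivision of `D` with chain lengths `w`. -/
def IsWeakSubdivision (G D : Multigraph) (w : D.E → ℕ) : Prop :=
  ZeroAcyclic D w ∧ IsIso G (subdivide D w)

/-- `D` is a weak distillation of `G`. -/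
def IsWeakDistillation (D G : Multigraph) : Prop :=
  ∃ w : D.E → ℕ, IsWeakSubdivision G D w

/-- The chain lengths differ pairwise by at most one. -/
def BalancedWeights {E : Type} (w : E → ℕ) : Prop := ∀ e f : E, w e ≤ w f + 1

/-- `D ∈ 𝒟_k`: connected, cubic, 3-edge-connected, of exceedance `k`. -/
def memDk (k : ℕ) (D : Multigraph) : Prop :=
  D.Connected ∧ (∀ v : D.V, D.deg v = 3) ∧
    (∀ F : Finset D.E, D.Disconnects F → 3 ≤ F.card) ∧ D.nE = D.nV + k

/-- Identification of the two endpoints of the edge `e`. -/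
def contractRel (G : Multigraph) (e : G.E) : G.V → G.V → Prop :=
  fun u v => u = G.src e ∧ v = G.tgt e

/-- Contraction of the edge `e`. -/
def Multigraph.contract (G : Multigraph) (e : G.E) : Multigraph :=
  letI := Classical.decEq G.E
  { V := Quot (contractRel G e)
    E := {f : G.E // f ≠ e}
    src := fun f => Quot.mk _ (G.src f.1)
    tgt := fun f => Quot.mk _ (G.tgt f.1) }

/-- `G'` is obtained from `G` by shifting an edge: in an intermediate graph `H`
(the expansion of `G` at a vertex by the new edge `e'`), the edges `e, e'` form a
2-bond; contracting `e'` gives back `G`, while contracting `e` gives `G'`. -/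
def IsShiftOf (G G' : Multigraph) : Prop :=
  ∃ (H : Multigraph) (e e' : H.E), e ≠ e' ∧
    H.src e ≠ H.tgt e ∧ H.src e' ≠ H.tgt e' ∧
    H.IsBond {e, e'} ∧
    IsIso (H.contract e') G ∧ IsIso (H.contract e) G'

/-- Equivalence of graphs: repeated edge shifting. -/
def EquivalentGraphs (G G' : Multigraph) : Prop :=
  Relation.ReflTransGen IsShiftOf G G'

/-- `G'` is obtained from `G` by moving the (non-loop) edge `e`: contracting `e` and
expanding a new edge, identified with `e` via `φ`, at an arbitrary vertex.
Equivalently, `G/e` and `G'/φ e` agree, compatibly with the edge identification `φ`. -/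
def MovedEdge (G G' : Multigraph) (φ : G.E ≃ G'.E) (e : G.E) : Prop :=
  G.src e ≠ G.tgt e ∧ G'.src (φ e) ≠ G'.tgt (φ e) ∧
  ∃ ψ : Quot (contractRel G e) ≃ Quot (contractRel G' (φ e)),
    ∀ f : G.E, f ≠ e →
      ((ψ (Quot.mk _ (G.src f)) = Quot.mk _ (G'.src (φ f)) ∧
        ψ (Quot.mk _ (G.tgt f)) = Quot.mk _ (G'.tgt (φ f))) ∨
       (ψ (Quot.mk _ (G.src f)) = Quot.mk _ (G'.tgt (φ f)) ∧
        ψ (Quot.mk _ (G.tgt f)) = Quot.mk _ (G'.src (φ f))))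

/-- Move one edge from the chain `a` to the chain `b`. -/
def moveWeight {E : Type} (w : E → ℕ) (a b : E) : E → ℕ :=
  fun g => if g = b then w b + 1 else if g = a then w a - 1 else w g

/-- The chains of maximal length. -/
def maxChains (D : Multigraph) (w : D.E → ℕ) : Finset D.E :=
  Finset.univ.filter fun e => ∀ f : D.E, w f ≤ w e

/-- The chains of minimal length. -/
def minChains (D : Multigraph) (w : D.E → ℕ) : Finset D.E :=
  Finset.univ.filter fun e => ∀ f : D.E, w e ≤ w f

/-- Degree of `v` within the edge set `S`. -/
def degIn (D : Multigraph) (S : Finset D.E) (v : D.V) : ℕ :=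
  (S.filter fun e => D.src e = v).card + (S.filter fun e => D.tgt e = v).card

/-- `S` is a matching (pairwise non-adjacent edges). -/
def IsMatchingIn (D : Multigraph) (S : Finset D.E) : Prop := ∀ v : D.V, degIn D S v ≤ 1

/-- `S` is a path with three edges. -/
def IsPath3In (D : Multigraph) (S : Finset D.E) : Prop :=
  S.card = 3 ∧ (∀ v : D.V, degIn D S v ≤ 2) ∧
    (Finset.univ.filter fun v : D.V => degIn D S v = 1).card = 2

/-- `S` is the disjoint union of a path with three edges and a single edge. -/
def IsPath3PlusEdgeIn (D : Multigraph) (S : Finset D.E) : Prop :=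
  S.card = 4 ∧ (∀ v : D.V, degIn D S v ≤ 2) ∧
    (Finset.univ.filter fun v : D.V => degIn D S v = 1).card = 4 ∧
    ∃ e ∈ S, degIn D S (D.src e) = 2 ∧ degIn D S (D.tgt e) = 2

/-- `S` is the disjoint union of two paths with two edges each. -/
def IsTwoPlusTwoIn (D : Multigraph) (S : Finset D.E) : Prop :=
  S.card = 4 ∧ (∀ v : D.V, degIn D S v ≤ 2) ∧
    (Finset.univ.filter fun v : D.V => degIn D S v = 1).card = 4 ∧
    ∀ e ∈ S, degIn D S (D.src e) = 1 ∨ degIn D S (D.tgt e) = 1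

/-- Two edges sharing a vertex. -/
def AdjEdges (D : Multigraph) (a b : D.E) : Prop :=
  ∃ v : D.V, (D.src a = v ∨ D.tgt a = v) ∧ (D.src b = v ∨ D.tgt b = v)

/-- The number of incidences of edges of weight `c` at the vertex `u`. -/
def incCount (D : Multigraph) (w : D.E → ℕ) (u : D.V) (c : ℕ) : ℕ :=
  (Finset.univ.filter fun e : D.E => D.src e = u ∧ w e = c).card +
    (Finset.univ.filter fun e : D.E => D.tgt e = u ∧ w e = c).card

/-- The `π^v`-value of the vertex `u`: the number of incident edges of weight `q + 1`
minus the number of incident edges of weight `q - 1`. -/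
def piV (D : Multigraph) (w : D.E → ℕ) (q : ℕ) (u : D.V) : ℤ :=
  (incCount D w u (q + 1) : ℤ) -
    (if q = 0 then 0 else (incCount D w u (q - 1) : ℤ))

/-- The `π^v`-values are balanced: pairwise differences at most one. -/
def BalancedPiV (D : Multigraph) (w : D.E → ℕ) (q : ℕ) : Prop :=
  ∀ u v : D.V, piV D w q u ≤ piV D w q v + 1

/-- The standard weight `q`, where `m = 3kq + r` with `-3k/2 < r ≤ 3k/2`. -/
def stdWeight (m k : ℕ) : ℕ := (2 * m + 3 * k - 1) / (6 * k)

/-- `w` is a balanced weighting of `D` of total size `m` (the implied weak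
subdivision is the generic member of `ℬ_m(D)`). -/
def IsBalancedWeighting (D : Multigraph) (w : D.E → ℕ) (m : ℕ) : Prop :=
  (∑ e : D.E, w e) = m ∧ BalancedWeights w ∧ ZeroAcyclic D w

/-- Every 3-bond of `D` is trivial (consists of the three edges at a single vertex). -/
def OnlyTrivialThreeBonds (D : Multigraph) : Prop :=
  ∀ F : Finset D.E, D.IsBond F → F.card = 3 →
    ∃ u : D.V, F = Finset.univ.filter fun e => D.src e = u ∨ D.tgt e = u

/-- The 3-dipole: two vertices joined by three parallel edges. -/
def dipole3 : Multigraph where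
  V := Fin 2
  E := Fin 3
  src _ := 0
  tgt _ := 1

/-- The complete graph `K₄`. -/
def K4 : Multigraph where
  V := Fin 4
  E := {p : Fin 4 × Fin 4 // p.1 < p.2}
  src p := p.1.1
  tgt p := p.1.2

/-- The complete bipartite graph `K_{3,3}`. -/
def K33 : Multigraph where
  V := Fin 3 ⊕ Fin 3
  E := Fin 3 × Fin 3
  src p := Sum.inl p.1
  tgt p := Sum.inr p.2

/-- The triangular prism `Π₃`; the edges `Sum.inr i` are the rungs. -/
def prism : Multigraph where
  V := Fin 3 × Bool
  E := (Fin 3 × Bool) ⊕ Fin 3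
  src := fun e => match e with
    | Sum.inl (i, b) => (i, b)
    | Sum.inr i => (i, false)
  tgt := fun e => match e with
    | Sum.inl (i, b) => (i + 1, b)
    | Sum.inr i => (i, true)

/-- The Wagner graph (the 4-Möbius ladder): the edges `Sum.inl i` are the rails
(the 8-cycle) and the edges `Sum.inr j` are the rungs. -/
def wagner : Multigraph where
  V := Fin 8
  E := Fin 8 ⊕ Fin 4
  src := fun e => match e with
    | Sum.inl i => i
    | Sum.inr j => ⟨j.val, by omega⟩
  tgt := fun e => match e with
    | Sum.inl i => i + 1
    | Sum.inr j => ⟨j.val + 4, by omega⟩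

/-- The Petersen graph. -/
def petersen : Multigraph where
  V := Fin 5 × Bool
  E := Fin 5 ⊕ Fin 5 ⊕ Fin 5
  src := fun e => match e with
    | Sum.inl i => (i, false)
    | Sum.inr (Sum.inl i) => (i, false)
    | Sum.inr (Sum.inr i) => (i, true)
  tgt := fun e => match e with
    | Sum.inl i => (i + 1, false)
    | Sum.inr (Sum.inl i) => (i, true)
    | Sum.inr (Sum.inr i) => (i + 2, true)

namespace CWD
open Multigraph

lemma connOn_iff (G : Multigraph) (S : Finset G.E) : G.ConnOn S ↔
    ∀ A : Set G.V, (∀ e ∈ S, (G.src e ∈ A ↔ G.tgt e ∈ A)) → ∀ u v, u ∈ A → v ∈ A := by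
  constructor
  · intro h A hA u v hu
    have := h u v
    induction this with
    | refl => exact hu
    | tail _ hs ih =>
      obtain ⟨e, he, ⟨rfl, rfl⟩ | ⟨rfl, rfl⟩⟩ := hs
      · exact (hA e he).1 ih
      · exact (hA e he).2 ih
  · intro h u v
    refine h {x | Relation.ReflTransGen (G.stepOn S) u x} ?_ u v Relation.ReflTransGen.refl
    intro e he
    constructor
    · intro hx
      exact hx.tail ⟨e, he, Or.inl ⟨rfl, rfl⟩⟩
    · intro hx
      exact hx.tail ⟨e, he, Or.inr ⟨rfl, rfl⟩⟩

lemma connected_iff (G : Multigraph) : G.Connected ↔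
    ∀ A : Set G.V, (∀ e, (G.src e ∈ A ↔ G.tgt e ∈ A)) → ∀ u v, u ∈ A → v ∈ A := by
  simp [Connected, connOn_iff]

lemma not_bridge_iff (G : Multigraph) (f : G.E) : ¬ G.IsBridge f ↔
    ∀ A : Set G.V, (∀ e, e ≠ f → (G.src e ∈ A ↔ G.tgt e ∈ A)) → ∀ u v, u ∈ A → v ∈ A := by
  simp only [IsBridge, Disconnects, connOn_iff, not_not, Finset.mem_sdiff, Finset.mem_univ,
    true_and, Finset.mem_singleton, ne_eq]

lemma connected_of_not_bridge (G : Multigraph) (f : G.E) (h : ¬ G.IsBridge f) : G.Connected := by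
  rw [not_bridge_iff] at h
  rw [connected_iff]
  exact fun A hA => h A (fun e _ => hA e)

lemma deg_eq (G : Multigraph) (v : G.V) : G.deg v =
    ∑ e, ((if G.src e = v then 1 else 0) + (if G.tgt e = v then 1 else 0)) := by
  rw [deg, Finset.sum_add_distrib, Finset.card_filter, Finset.card_filter]

lemma iso_symm {G H : Multigraph} (h : IsIso G H) : IsIso H G := by
  obtain ⟨⟨a, b, hab⟩⟩ := h
  refine ⟨⟨a.symm, b.symm, fun e => ?_⟩⟩
  rcases hab (b.symm e) with ⟨h1, h2⟩ | ⟨h1, h2⟩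
  · left; simp at h1 h2; simp [h1, h2]
  · right; simp at h1 h2; simp [h1, h2]

lemma iso_deg {G H : Multigraph} (i : MGIso G H) (v : G.V) : H.deg (i.vMap v) = G.deg v := by
  rw [deg_eq, deg_eq, ← i.eMap.sum_comp]
  apply Finset.sum_congr rfl
  intro e _
  rcases i.ends_eq e with ⟨h1, h2⟩ | ⟨h1, h2⟩
  · simp [h1, h2]
  · simp [h1, h2, add_comm]

lemma iso_bridgeless {G H : Multigraph} (h : IsIso G H) (hH : H.Bridgeless) : G.Bridgeless := by
  obtain ⟨i⟩ := h
  intro f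
  have := hH (i.eMap f)
  rw [not_bridge_iff] at this ⊢
  intro A hA u v hu
  have := this (i.vMap.symm ⁻¹' A) (fun e he => ?_) (i.vMap u) (i.vMap v) (by simpa using hu)
  · simpa using this
  · obtain ⟨e, rfl⟩ := i.eMap.surjective e
    have := hA e (by rintro rfl; exact he rfl)
    rcases i.ends_eq e with ⟨h1, h2⟩ | ⟨h1, h2⟩
    · simp [h1, h2, this]
    · simp [h1, h2, this]

lemma iso_connected {G H : Multigraph} (h : IsIso G H) (hH : H.Connected) : G.Connected := by
  obtain ⟨i⟩ := h
  rw [connected_iff] at hH ⊢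
  intro A hA u v hu
  have := hH (i.vMap.symm ⁻¹' A) (fun e => ?_) (i.vMap u) (i.vMap v) (by simpa using hu)
  · simpa using this
  · obtain ⟨e, rfl⟩ := i.eMap.surjective e
    have := hA e
    rcases i.ends_eq e with ⟨h1, h2⟩ | ⟨h1, h2⟩
    · simp [h1, h2, this]
    · simp [h1, h2, this]

/-! chain nodes -/
lemma cn_zero (D : Multigraph) (w : D.E → ℕ) (e : D.E) :
    chainNode D w e 0 = Sum.inl (Quot.mk _ (D.src e)) := by
  simp [chainNode]

lemma cn_last (D : Multigraph) (w : D.E → ℕ) (e : D.E) :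
    chainNode D w e (w e) = Sum.inl (Quot.mk _ (D.tgt e)) := by
  by_cases h : w e = 0
  · rw [h, cn_zero]
    congr 1
    exact Quot.sound ⟨e, h, rfl, rfl⟩
  · simp [chainNode, h]

lemma cn_inner (D : Multigraph) (w : D.E → ℕ) (e : D.E) (i : Fin (w e - 1)) :
    chainNode D w e (i.val + 1) = Sum.inr ⟨e, i⟩ := by
  have := i.2
  have h : 0 < i.val + 1 ∧ i.val + 1 < w e := by omega
  simp only [chainNode, dif_pos h]
  rfl

lemma cn_inl (D : Multigraph) (w : D.E → ℕ) (e : D.E) (j : ℕ) (q) (hj : j < w e) :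
    chainNode D w e j = Sum.inl q ↔ j = 0 ∧ Quot.mk _ (D.src e) = q := by
  unfold chainNode
  split_ifs with h1 h2
  · simp; omega
  · simp [h2]
  · omega

lemma cn_inl' (D : Multigraph) (w : D.E → ℕ) (e : D.E) (j : ℕ) (q) (hj : j < w e) :
    chainNode D w e (j + 1) = Sum.inl q ↔ j + 1 = w e ∧ Quot.mk _ (D.tgt e) = q := by
  unfold chainNode
  split_ifs with h1 h2
  · simp; omega
  · simp at h2
  · simp; omega

lemma cn_inr (D : Multigraph) (w : D.E → ℕ) (e f : D.E) (j : ℕ) (i : Fin (w f - 1)) :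
    chainNode D w e j = Sum.inr ⟨f, i⟩ ↔ e = f ∧ j = i.val + 1 := by
  constructor
  · unfold chainNode
    split_ifs with h1 h2
    · intro h
      have h := Sum.inr.inj h
      obtain ⟨rfl, h⟩ := Sigma.mk.inj h
      have h := eq_of_heq h
      subst h
      simp; omega
    · simp
    · simp
  · rintro ⟨rfl, rfl⟩
    exact cn_inner D w e i

lemma sub_deg (D : Multigraph) (w : D.E → ℕ)
    (x : Quot (zeroRel D w) ⊕ (Σ f : D.E, Fin (w f - 1))) :
    (subdivide D w).deg x =
      (univ.filter fun e : Σ f : D.E, Fin (w f) => chainNode D w e.1 e.2.val = x).card +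
      (univ.filter fun e : Σ f : D.E, Fin (w f) => chainNode D w e.1 (e.2.val + 1) = x).card := by
  unfold Multigraph.deg
  congr! <;> (rename_i h; cases eq_of_heq h; rfl)

lemma sub_deg_inl (D : Multigraph) (w : D.E → ℕ) (q : Quot (zeroRel D w)) :
    (subdivide D w).deg (Sum.inl q) =
      (univ.filter fun e : D.E => 0 < w e ∧ Quot.mk (zeroRel D w) (D.src e) = q).card +
      (univ.filter fun e : D.E => 0 < w e ∧ Quot.mk (zeroRel D w) (D.tgt e) = q).card := by
  rw [sub_deg]
  congr 1
  · symm
    refine Finset.card_bij (fun e he => (⟨e, ⟨0, (by simpa using he : _ ∧ _).1⟩⟩ : Σ f : D.E, Fin (w f))) ?_ ?_ ?_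
    · intro e he
      simp at he
      simp [cn_zero, he.2]
    · intro e he e' he' h
      exact congrArg Sigma.fst h
    · rintro ⟨e, j⟩ he
      simp only [mem_filter, mem_univ, true_and] at he
      rw [cn_inl _ _ _ _ _ j.2] at he
      refine ⟨e, by simp [he.2]; have := j.2; omega, ?_⟩
      congr 1
      exact Fin.ext he.1.symm
  · symm
    refine Finset.card_bij (fun e he => (⟨e, ⟨w e - 1, Nat.sub_lt (by simpa using he : _ ∧ _).1 one_pos⟩⟩ : Σ f : D.E, Fin (w f))) ?_ ?_ ?_
    · intro e he
      simp at he
      have h : w e - 1 + 1 = w e := by omega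
      simp only [mem_filter, mem_univ, true_and, h, cn_last, he.2]
    · intro e he e' he' h
      exact congrArg Sigma.fst h
    · rintro ⟨e, j⟩ he
      simp only [mem_filter, mem_univ, true_and] at he
      rw [cn_inl' _ _ _ _ _ j.2] at he
      refine ⟨e, by simp [he.2]; have := j.2; omega, ?_⟩
      congr 1
      apply Fin.ext
      simp; omega

lemma sub_deg_inr (D : Multigraph) (w : D.E → ℕ) (x : Σ f : D.E, Fin (w f - 1)) :
    (subdivide D w).deg (Sum.inr x) = 2 := by
  obtain ⟨f, i⟩ := x
  have hi := i.2
  rw [sub_deg]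
  have h1 : (univ.filter fun e : Σ f : D.E, Fin (w f) => chainNode D w e.1 e.2.val = Sum.inr ⟨f, i⟩) =
      {(⟨f, ⟨i.val + 1, by omega⟩⟩ : Σ f : D.E, Fin (w f))} := by
    ext ⟨e, j⟩
    simp only [mem_filter, mem_univ, true_and, cn_inr, mem_singleton]
    constructor
    · rintro ⟨rfl, h⟩
      congr 1
      exact Fin.ext h
    · intro h
      obtain ⟨rfl, h⟩ := Sigma.mk.inj h
      have h := eq_of_heq h
      subst h
      simp
  have h2 : (univ.filter fun e : Σ f : D.E, Fin (w f) => chainNode D w e.1 (e.2.val + 1) = Sum.inr ⟨f, i⟩) =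
      {(⟨f, ⟨i.val, by omega⟩⟩ : Σ f : D.E, Fin (w f))} := by
    ext ⟨e, j⟩
    simp only [mem_filter, mem_univ, true_and, cn_inr, mem_singleton]
    constructor
    · rintro ⟨rfl, h⟩
      congr 1
      exact Fin.ext (by simpa using h)
    · intro h
      obtain ⟨rfl, h⟩ := Sigma.mk.inj h
      have h := eq_of_heq h
      subst h
      simp
  rw [h1, h2]
  rfl

/-! a set of vertices which is crossed by no edge of a segment of a chain -/
lemma seg (D : Multigraph) (w : D.E → ℕ) (e : D.E) (A : Set (subdivide D w).V) (a b : ℕ)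
    (hb : b ≤ w e) (hab : a ≤ b)
    (h : ∀ j, a ≤ j → j < b → (chainNode D w e j ∈ A ↔ chainNode D w e (j + 1) ∈ A)) :
    chainNode D w e a ∈ A ↔ chainNode D w e b ∈ A := by
  induction b, hab using Nat.le_induction with
  | base => rfl
  | succ b hab ih =>
    rw [ih (by omega) (fun j h1 h2 => h j h1 (by omega)), h b hab (by omega)]

lemma sub_bridgeless (D : Multigraph) (w : D.E → ℕ) (hD : D.Bridgeless) :
    (subdivide D w).Bridgeless := by
  rintro ⟨f, i⟩
  have hi := i.2
  refine (not_bridge_iff _ _).2 ?_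
  intro A hA
  have hA' : ∀ e j, j < w e → ¬ (e = f ∧ j = i.val) →
      (chainNode D w e j ∈ A ↔ chainNode D w e (j + 1) ∈ A) := by
    intro e j hj hne
    refine hA ⟨e, ⟨j, hj⟩⟩ ?_
    intro h
    apply hne
    obtain ⟨rfl, h⟩ := Sigma.mk.inj h
    have h := eq_of_heq h
    subst h
    simp
  have key := (not_bridge_iff D f).1 (hD f) {v | Sum.inl (Quot.mk _ v) ∈ A} (by
    intro e he
    have := seg D w e A 0 (w e) le_rfl (Nat.zero_le _)
      (fun j _ hj => hA' e j hj (fun h => he h.1))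
    rwa [cn_zero, cn_last] at this)
  have hcl : ∀ e j, j ≤ w e → (chainNode D w e j ∈ A ↔ Sum.inl (Quot.mk _ (D.src e)) ∈ A) := by
    intro e j hj
    by_cases hc : e = f ∧ i.val < j
    · obtain ⟨rfl, hc⟩ := hc
      have := seg D w e A j (w e) le_rfl hj (fun j' h1 h2 => hA' e j' h2 (by omega))
      rw [this, cn_last]
      exact ⟨fun h => key _ _ h, fun h => key _ _ h⟩
    · have := seg D w e A 0 j hj (Nat.zero_le _) (fun j' h1 h2 => hA' e j' (by omega) (by
        rintro ⟨h3, h4⟩; exact hc ⟨h3, by omega⟩))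
      rw [← this, cn_zero]
  have hrep : ∀ x : (subdivide D w).V, ∃ v : D.V, (x ∈ A ↔ Sum.inl (Quot.mk _ v) ∈ A) := by
    rintro (q | ⟨e, j⟩)
    · obtain ⟨v, rfl⟩ := Quot.exists_rep q
      exact ⟨v, Iff.rfl⟩
    · refine ⟨D.src e, ?_⟩
      have := hcl e (j.val + 1) (by have := j.2; omega)
      rwa [cn_inner] at this
  intro u v hu
  obtain ⟨u', hu'⟩ := hrep u
  obtain ⟨v', hv'⟩ := hrep v
  exact hv'.2 (key _ _ (hu'.1 hu))

/-! counting classes -/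
def relOn (D : Multigraph) (S : Finset D.E) : D.V → D.V → Prop :=
  fun u v => ∃ e ∈ S, D.src e = u ∧ D.tgt e = v

lemma card_quot_ge (D : Multigraph) (S : Finset D.E) :
    Fintype.card D.V ≤ Fintype.card (Quot (relOn D S)) + S.card := by
  induction S using Finset.induction_on with
  | empty =>
    simp only [card_empty, add_zero]
    refine Fintype.card_le_of_injective (Quot.mk (relOn D ∅)) ?_
    intro a b h
    have : ∀ x y, Quot.mk (relOn D ∅) x = Quot.mk (relOn D ∅) y → x = y := by
      intro x y hxy
      have := congrArg (Quot.lift (fun x : D.V => x) (by rintro a b ⟨e, he, _⟩; simp at he)) hxy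
      simpa using this
    exact this a b h
  | insert e S he ih =>
    rw [card_insert_of_notMem he]
    have : Fintype.card (Quot (relOn D S)) ≤ Fintype.card (Option (Quot (relOn D (insert e S)))) := by
      let g : Quot (relOn D (insert e S)) → Quot (relOn D S) := Quot.lift
        (fun x => if Quot.mk (relOn D S) x = Quot.mk _ (D.tgt e) then Quot.mk _ (D.src e)
          else Quot.mk _ x) (by
          rintro a b ⟨f, hf, rfl, rfl⟩
          rcases Finset.mem_insert.1 hf with rfl | hf
          · simp
          · have : Quot.mk (relOn D S) (D.src f) = Quot.mk _ (D.tgt f) :=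
              Quot.sound ⟨f, hf, rfl, rfl⟩
            rw [this])
      let φ : Quot (relOn D S) → Quot (relOn D (insert e S)) :=
        Quot.lift (fun x => Quot.mk _ x) (by
          rintro a b ⟨f, hf, rfl, rfl⟩
          exact Quot.sound ⟨f, Finset.mem_insert_of_mem hf, rfl, rfl⟩)
      have hg : ∀ q, q ≠ Quot.mk _ (D.tgt e) → g (φ q) = q := by
        intro q hq
        obtain ⟨x, rfl⟩ := Quot.exists_rep q
        change (if Quot.mk (relOn D S) x = Quot.mk _ (D.tgt e) then Quot.mk _ (D.src e)
          else Quot.mk _ x) = _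
        rw [if_neg hq]
      refine Fintype.card_le_of_injective
        (fun q => if q = Quot.mk _ (D.tgt e) then none else some (φ q)) ?_
      intro q q' h
      dsimp only at h
      split_ifs at h with h1 h2 h2
      · rw [h1, h2]
      · rw [← hg q h1, ← hg q' h2, Option.some.inj h]
    rw [Fintype.card_option] at this
    omega

lemma class_zero_lt (D : Multigraph) (w : D.E → ℕ) (hz : ZeroAcyclic D w)
    (q : Quot (zeroRel D w)) :
    (univ.filter fun e : D.E => w e = 0 ∧ Quot.mk (zeroRel D w) (D.src e) = q).card + 1 ≤
      (univ.filter fun v : D.V => Quot.mk (zeroRel D w) v = q).card := by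
  set S : Finset D.E := univ.filter fun e => w e = 0 ∧ Quot.mk (zeroRel D w) (D.src e) ≠ q with hS
  have h1 := card_quot_ge D S
  have h2 : (univ.filter fun e : D.E => w e = 0 ∧ Quot.mk (zeroRel D w) (D.src e) = q).card
      + S.card = (univ.filter fun e : D.E => w e = 0).card := by
    rw [← Finset.card_filter_add_card_filter_not (s := univ.filter fun e : D.E => w e = 0)
      (fun e => Quot.mk (zeroRel D w) (D.src e) = q), filter_filter, filter_filter]
  have h3 : Fintype.card (Quot (relOn D S)) ≤
      (univ.filter fun v : D.V => Quot.mk (zeroRel D w) v = q).card +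
        (univ.filter fun q' : Quot (zeroRel D w) => q' ≠ q).card := by
    let h : Quot (zeroRel D w) → Option (Quot (relOn D S)) := Quot.lift
      (fun x => if Quot.mk (zeroRel D w) x = q then none else some (Quot.mk _ x)) (by
        rintro a b ⟨e, he, rfl, rfl⟩
        have : Quot.mk (zeroRel D w) (D.src e) = Quot.mk _ (D.tgt e) :=
              Quot.sound ⟨e, he, rfl, rfl⟩
        rw [← this]
        split_ifs with hq
        · rfl
        · congr 1
          exact Quot.sound ⟨e, by simp [hS, he, hq], rfl, rfl⟩)
    have : (univ : Finset (Quot (relOn D S))).image some ⊆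
        ((univ.filter fun v : D.V => Quot.mk (zeroRel D w) v = q).image
          fun x => some (Quot.mk (relOn D S) x)) ∪
        (univ.filter fun q' : Quot (zeroRel D w) => q' ≠ q).image h := by
      intro o ho
      obtain ⟨r, -, rfl⟩ := Finset.mem_image.1 ho
      obtain ⟨x, rfl⟩ := Quot.exists_rep r
      rw [Finset.mem_union]
      by_cases hx : Quot.mk (zeroRel D w) x = q
      · left
        exact Finset.mem_image.2 ⟨x, by simpa using hx, rfl⟩
      · right
        refine Finset.mem_image.2 ⟨Quot.mk _ x, by simpa using hx, ?_⟩
        change (if Quot.mk (zeroRel D w) x = q then none else some (Quot.mk _ x)) = _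
        rw [if_neg hx]
    have := Finset.card_le_card this
    rw [Finset.card_image_of_injective _ (Option.some_injective _), Finset.card_univ] at this
    refine this.trans ((Finset.card_union_le _ _).trans ?_)
    exact add_le_add Finset.card_image_le Finset.card_image_le
  have h4 : (univ.filter fun q' : Quot (zeroRel D w) => q' ≠ q).card + 1 =
      Fintype.card (Quot (zeroRel D w)) := by
    rw [Finset.filter_ne', Finset.card_erase_of_mem (Finset.mem_univ _), Finset.card_univ]
    have : 0 < Fintype.card (Quot (zeroRel D w)) := Fintype.card_pos_iff.2 ⟨q⟩
    omega
  unfold ZeroAcyclic at hz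
  omega

lemma sub_deg_ne_one (D : Multigraph) (w : D.E → ℕ) (hz : ZeroAcyclic D w)
    (h3 : ∀ v, D.deg v = 3) (x : (subdivide D w).V) : (subdivide D w).deg x ≠ 1 := by
  rcases x with q | x
  · have hd := sub_deg_inl D w q
    have hlt := class_zero_lt D w hz q
    set C := univ.filter fun v : D.V => Quot.mk (zeroRel D w) v = q with hC
    have hsum : ∑ v ∈ C, D.deg v = 3 * C.card := by
      rw [Finset.sum_congr rfl (fun v _ => h3 v), Finset.sum_const, smul_eq_mul, mul_comm]
    have hs : ∀ s : D.E → D.V, ∑ v ∈ C, (univ.filter fun e => s e = v).card =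
        (univ.filter fun e : D.E => 0 < w e ∧ Quot.mk (zeroRel D w) (s e) = q).card +
        (univ.filter fun e : D.E => w e = 0 ∧ Quot.mk (zeroRel D w) (s e) = q).card := by
      intro s
      have h1 : ∑ v ∈ C, (univ.filter fun e => s e = v).card =
          (univ.filter fun e : D.E => s e ∈ C).card := by
        rw [Finset.card_eq_sum_card_fiberwise (s := univ.filter fun e : D.E => s e ∈ C) (f := s)
          (t := C) (fun e he => by simpa using he)]
        apply Finset.sum_congr rfl
        intro v hv
        rw [filter_filter]
        congr 1
        ext e
        simp only [mem_filter, mem_univ, true_and]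
        constructor
        · rintro rfl; exact ⟨hv, rfl⟩
        · exact fun h => h.2
      rw [h1, ← Finset.card_filter_add_card_filter_not (s := univ.filter fun e : D.E => s e ∈ C)
        (fun e => 0 < w e), filter_filter, filter_filter]
      congr 2
      · ext e; simp [hC, and_comm]
      · ext e; simp [hC, and_comm]
    have hsrc := hs D.src
    have htgt := hs D.tgt
    have heq : (univ.filter fun e : D.E => w e = 0 ∧ Quot.mk (zeroRel D w) (D.tgt e) = q) =
        (univ.filter fun e : D.E => w e = 0 ∧ Quot.mk (zeroRel D w) (D.src e) = q) := by
      ext e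
      simp only [mem_filter, mem_univ, true_and, and_congr_right_iff]
      intro he
      rw [show Quot.mk (zeroRel D w) (D.src e) = Quot.mk _ (D.tgt e) from
              Quot.sound ⟨e, he, rfl, rfl⟩]
    rw [heq] at htgt
    have : ∑ v ∈ C, D.deg v = ∑ v ∈ C, (univ.filter fun e => D.src e = v).card +
        ∑ v ∈ C, (univ.filter fun e => D.tgt e = v).card := by
      rw [← Finset.sum_add_distrib]; rfl
    intro h
    omega
  · have := sub_deg_inr D w x
    omega

/-! Splitting a vertex -/
def pr (D : Multigraph) (v : D.V) : Option D.V → D.V := fun x => x.getD v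

/-- Split off from `v` the half-edges in `T`. -/
def split (D : Multigraph) (v : D.V) (T : Set (D.E × Bool)) : Multigraph where
  V := Option D.V
  E := Option D.E
  src e := e.elim none (fun e => if D.src e = v ∧ (e, false) ∈ T then none else some (D.src e))
  tgt e := e.elim (some v) (fun e => if D.tgt e = v ∧ (e, true) ∈ T then none else some (D.tgt e))

def spw (D : Multigraph) (v : D.V) (T : Set (D.E × Bool)) (w : D.E → ℕ) : (split D v T).E → ℕ := fun e => e.elim 0 w

lemma split_iso (D : Multigraph) (v : D.V) (T : Set (D.E × Bool)) (w : D.E → ℕ) :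
    ∃ i : MGIso (subdivide D w) (subdivide (split D v T) (spw D v T w)),
      Fintype.card (Quot (zeroRel D w)) = Fintype.card (Quot (zeroRel (split D v T) (spw D v T w))) := by
  set D' := split D v T
  let w' : D'.E → ℕ := spw D v T w
  have hmk : ∀ x : D'.V, Quot.mk (zeroRel D' w') x = Quot.mk _ (some (pr D v x)) := by
    rintro (_ | x)
    · exact Quot.sound ⟨none, rfl, rfl, rfl⟩
    · rfl
  have hps : ∀ e, pr D v (D'.src (some e)) = D.src e := by
    intro e
    change pr D v (if D.src e = v ∧ (e, false) ∈ T then none else some (D.src e)) = _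
    split_ifs with h
    · exact h.1.symm
    · rfl
  have hpt : ∀ e, pr D v (D'.tgt (some e)) = D.tgt e := by
    intro e
    change pr D v (if D.tgt e = v ∧ (e, true) ∈ T then none else some (D.tgt e)) = _
    split_ifs with h
    · exact h.1.symm
    · rfl
  let qe : Quot (zeroRel D w) ≃ Quot (zeroRel D' w') :=
    { toFun := Quot.lift (fun x => Quot.mk _ (some x)) (by
        rintro a b ⟨e, he, rfl, rfl⟩
        have h : Quot.mk (zeroRel D' w') (D'.src (some e)) = Quot.mk _ (D'.tgt (some e)) :=
          Quot.sound ⟨some e, he, rfl, rfl⟩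
        have h1 := (hmk (D'.src (some e))).symm.trans (h.trans (hmk (D'.tgt (some e))))
        exact (congrArg (fun x => Quot.mk (zeroRel D' w') (some x)) (hps e).symm).trans
          (h1.trans (congrArg (fun x => Quot.mk (zeroRel D' w') (some x)) (hpt e))))
      invFun := Quot.lift (fun x => Quot.mk _ (pr D v x)) (by
        rintro a b ⟨e, he, rfl, rfl⟩
        rcases e with _ | e
        · rfl
        · rw [hps, hpt]
          exact Quot.sound ⟨e, he, rfl, rfl⟩)
      left_inv := by
        intro q
        obtain ⟨x, rfl⟩ := Quot.exists_rep q
        rfl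
      right_inv := by
        intro q
        obtain ⟨x, rfl⟩ := Quot.exists_rep q
        exact (hmk x).symm }
  let ie : (Σ f : D.E, Fin (w f - 1)) ≃ (Σ f : D'.E, Fin (w' f - 1)) :=
    { toFun := fun x => ⟨some x.1, x.2⟩
      invFun := fun x => match x with
        | ⟨some f, i⟩ => ⟨f, i⟩
        | ⟨none, i⟩ => i.elim0
      left_inv := by rintro ⟨f, i⟩; rfl
      right_inv := by
        rintro ⟨_ | f, i⟩
        · exact i.elim0
        · rfl }
  let ee : (Σ f : D.E, Fin (w f)) ≃ (Σ f : D'.E, Fin (w' f)) :=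
    { toFun := fun x => ⟨some x.1, x.2⟩
      invFun := fun x => match x with
        | ⟨some f, i⟩ => ⟨f, i⟩
        | ⟨none, i⟩ => i.elim0
      left_inv := by rintro ⟨f, i⟩; rfl
      right_inv := by
        rintro ⟨_ | f, i⟩
        · exact i.elim0
        · rfl }
  have hcn : ∀ e j, chainNode D' w' (some e) j = (Equiv.sumCongr qe ie) (chainNode D w e j) := by
    intro e j
    have hw : w' (some e) = w e := rfl
    unfold chainNode
    by_cases h1 : 0 < j ∧ j < w e
    · rw [dif_pos h1, dif_pos (show 0 < j ∧ j < w' (some e) from h1)]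
      rfl
    · rw [dif_neg h1, dif_neg (show ¬ (0 < j ∧ j < w' (some e)) from h1)]
      split_ifs with h2
      · rw [hmk, hps]; rfl
      · rw [hmk, hpt]; rfl
  refine ⟨⟨Equiv.sumCongr qe ie, ee, ?_⟩, Fintype.card_congr qe⟩
  rintro ⟨e, j⟩
  left
  exact ⟨hcn e j.val, hcn e (j.val + 1)⟩

lemma split_zeroAcyclic (D : Multigraph) (v : D.V) (T : Set (D.E × Bool)) (w : D.E → ℕ)
    (h : ZeroAcyclic D w) : ZeroAcyclic (split D v T) (spw D v T w) := by
  obtain ⟨-, hc⟩ := split_iso D v T w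
  unfold ZeroAcyclic at h ⊢
  rw [← hc]
  have h1 : Fintype.card (split D v T).V = Fintype.card D.V + 1 := Fintype.card_option
  have h2 : (univ.filter fun e : (split D v T).E => spw D v T w e = 0).card =
      (univ.filter fun e : D.E => w e = 0).card + 1 := by
    have : (univ.filter fun e : Option D.E => (e.elim 0 w : ℕ) = 0) =
        Finset.insertNone (univ.filter fun e : D.E => w e = 0) := by
      ext (_ | e)
      · simp
      · simp
    rw [← Finset.card_insertNone, ← this]
    rfl
  rw [h1, h2]
  omega

lemma iso_trans {G H K : Multigraph} (h : IsIso G H) (h' : IsIso H K) : IsIso G K := by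
  obtain ⟨⟨a, b, hab⟩⟩ := h
  obtain ⟨⟨c, d, hcd⟩⟩ := h'
  refine ⟨⟨a.trans c, b.trans d, fun e => ?_⟩⟩
  rcases hab e with ⟨h1, h2⟩ | ⟨h1, h2⟩ <;> rcases hcd (b e) with ⟨h3, h4⟩ | ⟨h3, h4⟩ <;>
    simp [h1, h2, h3, h4]

/-- The vertex at which a half-edge is attached. -/
def hv (D : Multigraph) (h : D.E × Bool) : D.V := if h.2 then D.tgt h.1 else D.src h.1

lemma sum_half {E : Type} [Fintype E] (P : E × Bool → Prop) [DecidablePred P] :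
    ∑ e : E, ((if P (e, false) then 1 else 0) + (if P (e, true) then 1 else 0)) =
      (univ.filter P).card := by
  rw [Finset.card_filter, Fintype.sum_prod_type]
  apply Finset.sum_congr rfl
  intro e _
  rw [Fintype.sum_bool, add_comm]

lemma deg_half (D : Multigraph) (v : D.V) :
    D.deg v = (univ.filter fun h : D.E × Bool => hv D h = v).card := by
  rw [deg_eq, ← sum_half]
  simp [hv]

lemma split_deg (D : Multigraph) (v : D.V) (T : Set (D.E × Bool)) (x : Option D.V) :
    (split D v T).deg x = ((if none = x then 1 else 0) + (if some v = x then 1 else 0)) +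
      (univ.filter fun h : D.E × Bool =>
        (if hv D h = v ∧ h ∈ T then none else some (hv D h)) = x).card := by
  refine (deg_eq (split D v T) x).trans ?_
  refine (Fintype.sum_option _).trans ?_
  refine congrArg₂ (· + ·) (by congr!) (Eq.trans ?_ (sum_half _))
  congr!

lemma split_deg_none (D : Multigraph) (v : D.V) (a b : D.E × Bool) (hab : a ≠ b)
    (ha : hv D a = v) (hb : hv D b = v) : (split D v {a, b}).deg (none : Option D.V) = 3 := by
  rw [split_deg]
  refine (congrArg (_ + ·) (congrArg Finset.card (?_ : _ = ({a, b} : Finset _)))).trans ?_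
  · ext h
    simp only [mem_filter, mem_univ, true_and, mem_insert, mem_singleton]
    constructor
    · intro h1
      split_ifs at h1 with h2
      exact h2.2
    · intro h1
      rw [if_pos ⟨by rcases h1 with rfl | rfl <;> assumption, h1⟩]
  rw [Finset.card_pair hab]
  simp

lemma split_deg_self (D : Multigraph) (v : D.V) (a b : D.E × Bool) (hab : a ≠ b)
    (ha : hv D a = v) (hb : hv D b = v) :
    (split D v {a, b}).deg (some v : Option D.V) + 1 = D.deg v := by
  rw [split_deg, deg_half]
  refine (congrArg (_ + · + 1) (congrArg Finset.card
    (?_ : _ = (univ.filter fun h : D.E × Bool => hv D h = v) \ {a, b}))).trans ?_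
  · ext h
    simp only [mem_filter, mem_univ, true_and, mem_insert, mem_singleton, mem_sdiff]
    constructor
    · intro h1
      split_ifs at h1 with h2
      have h1 := Option.some.inj h1
      exact ⟨h1, fun h3 => h2 ⟨h1, h3⟩⟩
    · intro h1
      rw [if_neg (fun h2 => h1.2 h2.2), h1.1]
  have hsub : ({a, b} : Finset (D.E × Bool)) ⊆ univ.filter fun h : D.E × Bool => hv D h = v := by
    intro h hh
    simp only [mem_insert, mem_singleton] at hh
    rcases hh with rfl | rfl <;> simp [ha, hb]
  have := Finset.card_sdiff_add_card_eq_card hsub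
  rw [Finset.card_pair hab] at this
  simp
  omega

lemma split_deg_other (D : Multigraph) (v : D.V) (T : Set (D.E × Bool)) (x : D.V) (hx : x ≠ v) :
    (split D v T).deg (some x : Option D.V) = D.deg x := by
  rw [split_deg, deg_half]
  have : (univ.filter fun h : D.E × Bool =>
        (if hv D h = v ∧ h ∈ T then none else some (hv D h)) = some x) =
        (univ.filter fun h : D.E × Bool => hv D h = x) := by
    ext h
    simp only [mem_filter, mem_univ, true_and]
    split_ifs with h1
    · simp [h1.1, hx.symm]
    · simp
  rw [this]
  simp [hx.symm]

/-- membership of a half-edge in the side of a cut of the split graph -/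
def InC (D : Multigraph) (v : D.V) (T : Set (D.E × Bool)) (A : Set D.V) (h : D.E × Bool) : Prop :=
  if hv D h = v then h ∈ T else hv D h ∈ A

def Bad (D : Multigraph) (v : D.V) (T : Set (D.E × Bool)) : Prop :=
  ∃ A : Set D.V, v ∉ A ∧ ∀ e, InC D v T A (e, false) ↔ InC D v T A (e, true)

lemma not_both_bad (D : Multigraph) (hD : D.Bridgeless) (v : D.V) (a b c : D.E × Bool)
    (hab : a ≠ b) (hac : a ≠ c) (hbc : b ≠ c) (ha : hv D a = v)
    (h1 : Bad D v {a, b}) (h2 : Bad D v {a, c}) : False := by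
  obtain ⟨A1, hv1, h1⟩ := h1
  obtain ⟨A2, hv2, h2⟩ := h2
  have hI : ∀ h, InC D v {a} (A1 ∩ A2) h ↔ (InC D v {a, b} A1 h ∧ InC D v {a, c} A2 h) := by
    intro h
    unfold InC
    split_ifs with hh
    · simp only [Set.mem_singleton_iff, Set.mem_insert_iff]
      constructor
      · rintro rfl; simp
      · rintro ⟨rfl | rfl, h | h⟩ <;> first | rfl | exact h | exact absurd h hbc
    · rfl
  have hbal : ∀ e, InC D v {a} (A1 ∩ A2) (e, false) ↔ InC D v {a} (A1 ∩ A2) (e, true) := by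
    intro e
    rw [hI, hI, h1, h2]
  have hne : ∀ h, h ≠ a → (InC D v {a} (A1 ∩ A2) h ↔ hv D h ∈ A1 ∩ A2) := by
    intro h hh
    unfold InC
    split_ifs with h3
    · rw [h3]
      simp [hh, hv1]
    · rfl
  have haI : InC D v {a} (A1 ∩ A2) a := by
    unfold InC
    rw [if_pos ha]
    rfl
  have hbr := (not_bridge_iff D a.1).1 (hD a.1) (A1 ∩ A2) (by
    intro e he
    have := hbal e
    rw [hne, hne] at this
    · simpa [hv] using this
    · rintro rfl; exact he rfl
    · rintro rfl; exact he rfl)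
  have : ∃ u, u ∈ A1 ∩ A2 := by
    obtain ⟨e, _ | _⟩ := a
    · exact ⟨_, (hne (e, true) (by simp)).1 ((hbal e).1 haI)⟩
    · exact ⟨_, (hne (e, false) (by simp)).1 ((hbal e).2 haI)⟩
  obtain ⟨u, hu⟩ := this
  exact hv1 (hbr u v hu).1

lemma split_bridgeless (D : Multigraph) (hD : D.Bridgeless) (hc : D.Connected) (v : D.V)
    (T : Set (D.E × Bool)) (hT : ¬ Bad D v T) : (split D v T).Bridgeless := by
  have hbase : ∀ A : Set (Option D.V), (none ∈ A ↔ some v ∈ A) →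
      ∀ h : D.E × Bool, ((if hv D h = v ∧ h ∈ T then none else some (hv D h)) ∈ A ↔
        some (hv D h) ∈ A) := by
    intro A hA h
    split_ifs with h1
    · rw [h1.1, hA]
    · rfl
  have hfin : ∀ A : Set (Option D.V), (none ∈ A ↔ some v ∈ A) →
      (∀ u v : D.V, some u ∈ A → some v ∈ A) → ∀ u v : Option D.V, u ∈ A → v ∈ A := by
    intro A hA h u x hu
    have hv' : some v ∈ A := by
      rcases u with _ | u
      · exact hA.1 hu
      · exact h _ _ hu
    rcases x with _ | x
    · exact hA.2 hv'
    · exact h _ _ hv'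
  rintro (_ | f)
  · refine (not_bridge_iff _ _).2 ?_
    intro A hA
    change Set (Option D.V) at A
    have hA' : ∀ e : D.E,
        (if hv D (e, false) = v ∧ (e, false) ∈ T then none else some (hv D (e, false))) ∈ A ↔
        (if hv D (e, true) = v ∧ (e, true) ∈ T then none else some (hv D (e, true))) ∈ A :=
      fun e => hA (some e) (by rintro ⟨⟩)
    by_cases hn : none ∈ A ↔ some v ∈ A
    · refine hfin A hn ?_
      intro u x hu
      refine (connected_iff D).1 hc {x | some x ∈ A} ?_ u x hu
      intro e
      have := hA' e
      rw [hbase A hn, hbase A hn] at this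
      exact this
    · exfalso
      apply hT
      by_cases hn' : none ∈ A
      · have hv' : some v ∉ A := fun h => hn ⟨fun _ => h, fun _ => hn'⟩
        refine ⟨{x | some x ∈ A}, hv', ?_⟩
        have : ∀ h, InC D v T {x | some x ∈ A} h ↔
            (if hv D h = v ∧ h ∈ T then none else some (hv D h)) ∈ A := by
          intro h
          unfold InC
          by_cases h1 : hv D h = v <;> by_cases h2 : h ∈ T <;> simp [h1, h2, hn', hv']
        intro e
        rw [this, this]
        exact hA' e
      · have hv' : some v ∈ A := by
          by_contra h
          exact hn ⟨fun h' => absurd h' hn', fun h' => absurd h' h⟩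
        refine ⟨{x | some x ∉ A}, by simpa using hv', ?_⟩
        have : ∀ h, InC D v T {x | some x ∉ A} h ↔
            ¬ (if hv D h = v ∧ h ∈ T then none else some (hv D h)) ∈ A := by
          intro h
          unfold InC
          by_cases h1 : hv D h = v <;> by_cases h2 : h ∈ T <;> simp [h1, h2, hn', hv']
        intro e
        rw [this, this]
        exact not_congr (hA' e)
  · refine (not_bridge_iff _ _).2 ?_
    intro A hA
    change Set (Option D.V) at A
    have hn : none ∈ A ↔ some v ∈ A := hA none (by rintro ⟨⟩)
    refine hfin A hn ?_
    intro u x hu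
    refine (not_bridge_iff D f).1 (hD f) {x | some x ∈ A} ?_ u x hu
    intro e he
    have : (if hv D (e, false) = v ∧ (e, false) ∈ T then none else some (hv D (e, false))) ∈ A ↔
        (if hv D (e, true) = v ∧ (e, true) ∈ T then none else some (hv D (e, true))) ∈ A :=
      hA (some e) (fun h => he (Option.some.inj h))
    rw [hbase A hn, hbase A hn] at this
    exact this

lemma phase2 (B : Prop) (G : Multigraph) : ∀ (N : ℕ) (D : Multigraph) (w : D.E → ℕ),
    ∑ v, (D.deg v - 3) = N → (∀ v, 3 ≤ D.deg v) → ZeroAcyclic D w → (B → D.Bridgeless) →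
    IsIso G (subdivide D w) →
    ∃ D' : Multigraph, (∀ v, D'.deg v = 3) ∧ (B → D'.Bridgeless) ∧ IsWeakDistillation D' G := by
  intro N
  induction N using Nat.strong_induction_on with
  | _ N ih =>
  intro D w hN h3 hz hB hG
  by_cases hall : ∀ v, D.deg v = 3
  · exact ⟨D, hall, hB, w, hz, hG⟩
  push Not at hall
  obtain ⟨v, hv3⟩ := hall
  have h4 : 2 < (univ.filter fun h : D.E × Bool => hv D h = v).card := by
    rw [← deg_half]
    have := h3 v
    omega
  obtain ⟨a, b, c, ha, hb, hc, hab, hac, hbc⟩ := Finset.two_lt_card_iff.1 h4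
  simp only [mem_filter, mem_univ, true_and] at ha hb hc
  have hT : ∃ b', a ≠ b' ∧ hv D b' = v ∧ (B → ¬ Bad D v {a, b'}) := by
    by_cases hb1 : B ∧ Bad D v {a, b}
    · refine ⟨c, hac, hc, fun hB' h => ?_⟩
      exact not_both_bad D (hB hB') v a b c hab hac hbc ha hb1.2 h
    · exact ⟨b, hab, hb, fun hB' h => hb1 ⟨hB', h⟩⟩
  obtain ⟨b', hab', hb', hgood⟩ := hT
  have hself := split_deg_self D v a b' hab' ha hb'
  have hnone := split_deg_none D v a b' hab' ha hb'
  have hother := split_deg_other D v {a, b'}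
  obtain ⟨i, -⟩ := split_iso D v {a, b'} w
  refine ih _ ?_ (split D v {a, b'}) (spw D v {a, b'} w) rfl ?_
    (split_zeroAcyclic D v _ w hz) ?_ (iso_trans hG ⟨i⟩)
  · have : ∑ x, ((split D v {a, b'}).deg x - 3) =
        ((split D v {a, b'}).deg (none : Option D.V) - 3) +
          ∑ x : D.V, ((split D v {a, b'}).deg (some x : Option D.V) - 3) := Fintype.sum_option _
    rw [this, hnone, ← hN]
    simp only [Nat.sub_self, zero_add]
    apply Finset.sum_lt_sum
    · intro x _
      by_cases hx : x = v
      · subst hx; omega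
      · rw [hother x hx]
    · refine ⟨v, Finset.mem_univ _, ?_⟩
      have := h3 v
      omega
  · rintro (_ | x)
    · exact hnone.ge
    · by_cases hx : x = v
      · subst hx
        have := h3 x
        change 3 ≤ (split D x {a, b'}).deg (some x : Option D.V)
        omega
      · exact (hother x hx).ge.trans' (h3 x)
  · intro hB'
    exact split_bridgeless D (hB hB') (connected_of_not_bridge D a.1 (hB hB' a.1)) v _ (hgood hB')

/-! Suppressing vertices of degree two -/
structure Dat (G : Multigraph) {V E : Type} (src tgt : E → V) (w : E → ℕ) where
  p : V → G.V
  N : E → ℕ → G.V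
  ed : E → ℕ → G.E
  wpos : ∀ e, 0 < w e
  pinj : ∀ x y, p x = p y → x = y
  h0 : ∀ e, N e 0 = p (src e)
  h1 : ∀ e, N e (w e) = p (tgt e)
  ends : ∀ e j, j < w e → s(G.src (ed e j), G.tgt (ed e j)) = s(N e j, N e (j + 1))
  edinj : ∀ e j e' j', j < w e → j' < w e' → ed e j = ed e' j' → e = e' ∧ j = j'
  edsurj : ∀ g, ∃ e j, j < w e ∧ ed e j = g
  inn : ∀ e j x, 0 < j → j < w e → N e j ≠ p x
  Ninj : ∀ e j e' j', 0 < j → j < w e → 0 < j' → j' < w e' → N e j = N e' j' → e = e' ∧ j = j'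
  Nsurj : ∀ y, (∃ x, p x = y) ∨ ∃ e j, 0 < j ∧ j < w e ∧ N e j = y

lemma mk_inj_of_pos (D : Multigraph) (w : D.E → ℕ) (hw : ∀ e, 0 < w e) (x y : D.V)
    (h : Quot.mk (zeroRel D w) x = Quot.mk (zeroRel D w) y) : x = y := by
  have := congrArg (Quot.lift (fun x : D.V => x)
    (by rintro a b ⟨e, he, _⟩; have := hw e; omega)) h
  simpa using this

lemma card_quot_of_pos (D : Multigraph) (w : D.E → ℕ) (hw : ∀ e, 0 < w e) :
    Fintype.card (Quot (zeroRel D w)) = Fintype.card D.V := by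
  symm
  exact Fintype.card_of_bijective (f := Quot.mk (zeroRel D w))
    ⟨fun x y h => mk_inj_of_pos D w hw x y h, fun q => Quot.exists_rep q⟩

lemma zeroAcyclic_of_pos (D : Multigraph) (w : D.E → ℕ) (hw : ∀ e, 0 < w e) :
    ZeroAcyclic D w := by
  unfold ZeroAcyclic
  rw [card_quot_of_pos D w hw, Finset.card_eq_zero.2, add_zero]
  ext e
  have := hw e
  simp; omega

lemma sub_deg_of_pos (D : Multigraph) (w : D.E → ℕ) (hw : ∀ e, 0 < w e) (x : D.V) :
    (subdivide D w).deg (Sum.inl (Quot.mk _ x)) = D.deg x := by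
  rw [sub_deg_inl]
  have : ∀ y, Quot.mk (zeroRel D w) y = Quot.mk (zeroRel D w) x ↔ y = x :=
    fun y => ⟨mk_inj_of_pos D w hw y x, fun h => by rw [h]⟩
  simp only [hw, this, true_and]
  rfl

lemma Dat.iso {G D : Multigraph} {w : D.E → ℕ} (d : Dat G D.src D.tgt w) : IsIso G (subdivide D w) := by
  apply iso_symm
  have hinj : ∀ a b, zeroRel D w a b → d.p a = d.p b := by
    rintro a b ⟨e, he, _⟩
    have := d.wpos e
    omega
  let ψ : Quot (zeroRel D w) ⊕ (Σ f : D.E, Fin (w f - 1)) → G.V :=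
    Sum.elim (Quot.lift d.p hinj) (fun x => d.N x.1 (x.2.val + 1))
  have hψ : Function.Bijective ψ := by
    constructor
    · rintro (q | ⟨e, j⟩) (q' | ⟨e', j'⟩) h
      · obtain ⟨x, rfl⟩ := Quot.exists_rep q
        obtain ⟨y, rfl⟩ := Quot.exists_rep q'
        rw [d.pinj x y h]
      · obtain ⟨x, rfl⟩ := Quot.exists_rep q
        have := j'.2
        exact absurd h.symm (d.inn e' (j'.val + 1) x (by omega) (by omega))
      · obtain ⟨x, rfl⟩ := Quot.exists_rep q'
        have := j.2
        exact absurd h (d.inn e (j.val + 1) x (by omega) (by omega))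
      · have h1 := j.2
        have h2 := j'.2
        obtain ⟨rfl, h3⟩ := d.Ninj e (j.val + 1) e' (j'.val + 1) (by omega) (by omega) (by omega)
          (by omega) h
        have : j = j' := Fin.ext (by omega)
        rw [this]
    · intro y
      rcases d.Nsurj y with ⟨x, rfl⟩ | ⟨e, j, hj, hj', rfl⟩
      · exact ⟨Sum.inl (Quot.mk _ x), rfl⟩
      · refine ⟨Sum.inr ⟨e, ⟨j - 1, by omega⟩⟩, ?_⟩
        change d.N e (j - 1 + 1) = _
        rw [Nat.sub_add_cancel hj]
  let η : (Σ f : D.E, Fin (w f)) → G.E := fun x => d.ed x.1 x.2.val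
  have hη : Function.Bijective η := by
    constructor
    · rintro ⟨e, j⟩ ⟨e', j'⟩ h
      obtain ⟨rfl, h3⟩ := d.edinj e j e' j' j.2 j'.2 h
      rw [Fin.ext h3]
    · intro g
      obtain ⟨e, j, hj, rfl⟩ := d.edsurj g
      exact ⟨⟨e, ⟨j, hj⟩⟩, rfl⟩
  have hcn : ∀ e j, j ≤ w e → ψ (chainNode D w e j) = d.N e j := by
    intro e j hj
    unfold chainNode
    split_ifs with h1 h2
    · change d.N e (j - 1 + 1) = _
      rw [Nat.sub_add_cancel h1.1]
    · subst h2
      exact (d.h0 e).symm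
    · have : j = w e := by omega
      subst this
      exact (d.h1 e).symm
  refine ⟨⟨Equiv.ofBijective ψ hψ, Equiv.ofBijective η hη, ?_⟩⟩
  rintro ⟨e, j⟩
  have h1 := hcn e j.val j.2.le
  have h2 := hcn e (j.val + 1) j.2
  have h3 := d.ends e j.val j.2
  rw [← h1, ← h2, Sym2.eq_iff] at h3
  exact h3

def flip (D : Multigraph) (e0 : D.E) : Multigraph where
  V := D.V
  E := D.E
  src e := if e = e0 then D.tgt e else D.src e
  tgt e := if e = e0 then D.src e else D.tgt e

def Dat.flip {G : Multigraph} {V E : Type} {src tgt : E → V} {w : E → ℕ} (d : Dat G src tgt w)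
    (e0 : E) : Dat G (fun e => if e = e0 then tgt e else src e)
      (fun e => if e = e0 then src e else tgt e) w where
  p := d.p
  N := fun e j => if e = e0 then d.N e (w e - j) else d.N e j
  ed := fun e j => if e = e0 then d.ed e (w e - 1 - j) else d.ed e j
  wpos := d.wpos
  pinj := d.pinj
  h0 := by
    intro e
    have h0 := d.h0 e
    have h1 := d.h1 e
    split_ifs <;> simp_all
  h1 := by
    intro e
    have h0 := d.h0 e
    have h1 := d.h1 e
    split_ifs <;> simp_all
  ends := by
    intro e j hj
    split_ifs with h
    · have h2 := d.ends e (w e - 1 - j) (by omega)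
      rw [h2, show w e - 1 - j + 1 = w e - j by omega, show w e - (j + 1) = w e - 1 - j by omega]
      exact Sym2.eq_swap
    · exact d.ends e j hj
  edinj := by
    intro e j e' j' hj hj' h
    split_ifs at h with h1 h2 h2
    · obtain ⟨rfl, h3⟩ := d.edinj _ _ _ _ (by omega) (by omega) h
      exact ⟨rfl, by omega⟩
    · obtain ⟨rfl, h3⟩ := d.edinj _ _ _ _ (by omega) (by omega) h
      exact absurd h1 h2
    · obtain ⟨rfl, h3⟩ := d.edinj _ _ _ _ (by omega) (by omega) h
      exact absurd h2 h1
    · exact d.edinj _ _ _ _ hj hj' h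
  edsurj := by
    intro g
    obtain ⟨e, j, hj, rfl⟩ := d.edsurj g
    by_cases h : e = e0
    · refine ⟨e, w e - 1 - j, by omega, ?_⟩
      rw [if_pos h]
      congr 1
      omega
    · exact ⟨e, j, hj, by rw [if_neg h]⟩
  inn := by
    intro e j x hj hj'
    split_ifs with h
    · exact d.inn e _ x (by omega) (by omega)
    · exact d.inn e j x hj hj'
  Ninj := by
    intro e j e' j' hj0 hj hj0' hj' h
    split_ifs at h with h1 h2 h2
    · obtain ⟨rfl, h3⟩ := d.Ninj _ _ _ _ (by omega) (by omega) (by omega) (by omega) h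
      exact ⟨rfl, by omega⟩
    · obtain ⟨rfl, h3⟩ := d.Ninj _ _ _ _ (by omega) (by omega) (by omega) (by omega) h
      exact absurd h1 h2
    · obtain ⟨rfl, h3⟩ := d.Ninj _ _ _ _ (by omega) (by omega) (by omega) (by omega) h
      exact absurd h2 h1
    · exact d.Ninj _ _ _ _ hj0 hj hj0' hj' h
  Nsurj := by
    intro y
    rcases d.Nsurj y with h | ⟨e, j, hj, hj', rfl⟩
    · exact Or.inl h
    · right
      by_cases h : e = e0
      · refine ⟨e, w e - j, by omega, by omega, ?_⟩
        rw [if_pos h]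
        congr 1
        omega
      · exact ⟨e, j, hj, hj', by rw [if_neg h]⟩

lemma flip_hv (D : Multigraph) (e0 : D.E) (h : D.E × Bool) :
    hv (flip D e0) h = hv D (h.1, if h.1 = e0 then !h.2 else h.2) := by
  obtain ⟨e, b⟩ := h
  by_cases h : e = e0 <;> cases b <;> simp [hv, flip, h]

def mg (D : Multigraph) (v : D.V) (e1 e2 : D.E) (hs : ∀ e, e ≠ e2 → D.src e ≠ v)
    (ht : ∀ e, e ≠ e1 → D.tgt e ≠ v) (hne : e1 ≠ e2) : Multigraph where
  V := {x : D.V // x ≠ v}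
  E := {e : D.E // e ≠ e2}
  src e := ⟨D.src e.1, hs e.1 e.2⟩
  tgt e := if h : e.1 = e1 then ⟨D.tgt e2, ht e2 hne.symm⟩ else ⟨D.tgt e.1, ht e.1 h⟩

lemma mg_aux {E : Type} (w : E → ℕ) (e1 e2 e : E) (j : ℕ)
    (h3 : j < if e = e1 then w e1 + w e2 else w e) (h4 : ¬ (e = e1 ∧ w e1 ≤ j)) : j < w e := by
  split_ifs at h3 with h5
  · rw [h5]
    by_contra h
    exact h4 ⟨h5, by omega⟩
  · exact h3

def Dat.mg {G : Multigraph} {V E : Type} {src tgt : E → V} {w : E → ℕ} (d : Dat G src tgt w)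
    (v : V) (e1 e2 : E) (hs : ∀ e, e ≠ e2 → src e ≠ v)
    (ht : ∀ e, e ≠ e1 → tgt e ≠ v) (hne : e1 ≠ e2) (h1 : tgt e1 = v) (h2 : src e2 = v) :
    Dat G (V := {x : V // x ≠ v}) (E := {e : E // e ≠ e2}) (fun e => ⟨src e.1, hs e.1 e.2⟩)
      (fun e => if h : e.1 = e1 then ⟨tgt e2, ht e2 hne.symm⟩ else ⟨tgt e.1, ht e.1 h⟩)
      (fun e => if e.1 = e1 then w e1 + w e2 else w e.1) where
  p := fun x => d.p x.1
  N := fun e j => if e.1 = e1 ∧ w e1 ≤ j then d.N e2 (j - w e1) else d.N e.1 j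
  ed := fun e j => if e.1 = e1 ∧ w e1 ≤ j then d.ed e2 (j - w e1) else d.ed e.1 j
  wpos := by
    intro e
    have := d.wpos e1
    have := d.wpos e.1
    split_ifs <;> omega
  pinj := fun x y h => Subtype.ext (d.pinj _ _ h)
  h0 := by
    intro e
    have := d.wpos e1
    rw [if_neg (by omega)]
    exact d.h0 e.1
  h1 := by
    intro e
    have h3 := d.h1 e.1
    have h4 := d.h1 e2
    by_cases h : e.1 = e1
    · simp [h, h4]
    · simp [h, h3]
  ends := by
    intro e j hj
    have hb : d.N e2 0 = d.N e1 (w e1) := by rw [d.h0, d.h1, h1, h2]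
    by_cases h : e.1 = e1
    · rw [if_pos h] at hj
      by_cases h3 : w e1 ≤ j
      · rw [if_pos ⟨h, h3⟩, if_pos ⟨h, h3⟩, if_pos ⟨h, by omega⟩, d.ends e2 _ (by omega)]
        rw [show j + 1 - w e1 = j - w e1 + 1 by omega]
      · rw [if_neg (by omega), if_neg (by omega), h, d.ends e1 _ (by omega)]
        by_cases h4 : w e1 ≤ j + 1
        · rw [if_pos ⟨rfl, h4⟩]
          have : j + 1 = w e1 := by omega
          rw [this, Nat.sub_self, hb]
        · rw [if_neg (by omega)]
    · rw [if_neg h] at hj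
      rw [if_neg (by tauto), if_neg (by tauto), if_neg (by tauto), d.ends _ _ hj]
  edinj := by
    rintro ⟨e, he⟩ j ⟨e', he'⟩ j' hj hj' h
    dsimp only at h hj hj'
    have : e = e' ∧ j = j' := by
      split_ifs at h with h3 h4 h4
      · rw [if_pos h3.1] at hj
        rw [if_pos h4.1] at hj'
        obtain ⟨a, b⟩ := d.edinj _ _ _ _ (by omega) (by omega) h
        exact ⟨h3.1.trans h4.1.symm, by omega⟩
      · rw [if_pos h3.1] at hj
        obtain ⟨a, b⟩ := d.edinj _ _ _ _ (by omega) (mg_aux w e1 e2 _ _ hj' h4) h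
        exact absurd a.symm he'
      · rw [if_pos h4.1] at hj'
        obtain ⟨a, b⟩ := d.edinj _ _ _ _ (mg_aux w e1 e2 _ _ hj h3) (by omega) h
        exact absurd a he
      · exact d.edinj _ _ _ _ (mg_aux w e1 e2 _ _ hj h3) (mg_aux w e1 e2 _ _ hj' h4) h
    obtain ⟨rfl, rfl⟩ := this
    exact ⟨rfl, rfl⟩
  edsurj := by
    intro g
    obtain ⟨e, j, hj, rfl⟩ := d.edsurj g
    by_cases h : e = e2
    · subst h
      exact ⟨⟨e1, hne⟩, j + w e1, by simp; omega, by simp⟩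
    · refine ⟨⟨e, h⟩, j, ?_, ?_⟩
      · dsimp only
        split_ifs with h3
        · subst h3; omega
        · exact hj
      · rw [if_neg]
        rintro ⟨rfl, h3⟩
        simp at h3
        omega
  inn := by
    rintro ⟨e, he⟩ j ⟨x, hx⟩ hj hj'
    dsimp only at hj' ⊢
    split_ifs with h3
    · rw [if_pos h3.1] at hj'
      by_cases h4 : j = w e1
      · subst h4
        rw [Nat.sub_self, d.h0, h2]
        intro h
        exact hx (d.pinj _ _ h).symm
      · exact d.inn _ _ _ (by omega) (by omega)
    · refine d.inn _ _ _ hj ?_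
      exact mg_aux w e1 e2 _ _ hj' h3
  Ninj := by
    rintro ⟨e, he⟩ j ⟨e', he'⟩ j' hj0 hj hj0' hj' h
    dsimp only at h hj hj'
    have hz : d.N e2 0 = d.p v := by rw [d.h0, h2]
    have aux := mg_aux w e1 e2
    have : e = e' ∧ j = j' := by
      split_ifs at h with h3 h4 h4
      · rw [if_pos h3.1] at hj
        rw [if_pos h4.1] at hj'
        refine ⟨h3.1.trans h4.1.symm, ?_⟩
        by_cases h5 : j = w e1 <;> by_cases h6 : j' = w e1
        · omega
        · rw [h5, Nat.sub_self, hz] at h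
          exact absurd h.symm (d.inn _ _ _ (by omega) (by omega))
        · rw [h6, Nat.sub_self, hz] at h
          exact absurd h (d.inn _ _ _ (by omega) (by omega))
        · obtain ⟨a, b⟩ := d.Ninj _ _ _ _ (by omega) (by omega) (by omega) (by omega) h
          omega
      · rw [if_pos h3.1] at hj
        have hj' := aux _ _ hj' h4
        by_cases h5 : j = w e1
        · rw [h5, Nat.sub_self, hz] at h
          exact absurd h.symm (d.inn _ _ _ (by omega) (by omega))
        · obtain ⟨a, b⟩ := d.Ninj _ _ _ _ (by omega) (by omega) (by omega) (by omega) h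
          exact absurd a.symm he'
      · rw [if_pos h4.1] at hj'
        have hj := aux _ _ hj h3
        by_cases h5 : j' = w e1
        · rw [h5, Nat.sub_self, hz] at h
          exact absurd h (d.inn _ _ _ (by omega) (by omega))
        · obtain ⟨a, b⟩ := d.Ninj _ _ _ _ (by omega) (by omega) (by omega) (by omega) h
          exact absurd a he
      · exact d.Ninj _ _ _ _ hj0 (aux _ _ hj h3) hj0' (aux _ _ hj' h4) h
    obtain ⟨rfl, rfl⟩ := this
    exact ⟨rfl, rfl⟩
  Nsurj := by
    intro y
    have hw1 := d.wpos e1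
    have hw2 := d.wpos e2
    rcases d.Nsurj y with ⟨x, rfl⟩ | ⟨e, j, hj, hj', rfl⟩
    · by_cases hx : x = v
      · right
        refine ⟨⟨e1, hne⟩, w e1, hw1, by simp; omega, ?_⟩
        rw [if_pos ⟨rfl, le_rfl⟩, Nat.sub_self, d.h0, h2, hx]
      · exact Or.inl ⟨⟨x, hx⟩, rfl⟩
    · right
      by_cases h : e = e2
      · subst h
        exact ⟨⟨e1, hne⟩, j + w e1, by omega, by simp; omega, by simp⟩
      · refine ⟨⟨e, h⟩, j, hj, ?_, ?_⟩
        · dsimp only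
          split_ifs with h3
          · subst h3; omega
          · exact hj'
        · rw [if_neg]
          rintro ⟨rfl, h3⟩
          simp at h3
          omega

def Dat.init (G : Multigraph) : Dat G G.src G.tgt (fun _ => 1) where
  p := fun x => x
  N := fun e j => if j = 0 then G.src e else G.tgt e
  ed := fun e _ => e
  wpos := by simp
  pinj := fun _ _ h => h
  h0 := by simp
  h1 := by simp
  ends := by
    intro e j hj
    have : j = 0 := by omega
    simp [this]
  edinj := by
    intro e j e' j' hj hj' h
    exact ⟨h, by omega⟩
  edsurj := fun g => ⟨g, 0, by simp, rfl⟩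
  inn := by intro e j x h1 h2; omega
  Ninj := by intro e j e' j' h1 h2; omega
  Nsurj := fun y => Or.inl ⟨y, rfl⟩

lemma Dat.lift {G D : Multigraph} {w : D.E → ℕ} (d : Dat G D.src D.tgt w) (A : Set D.V) :
    ∃ B : Set G.V, (∀ x, d.p x ∈ B ↔ x ∈ A) ∧
      (∀ e j, j < w e → (d.N e j ∈ B ↔ D.src e ∈ A)) ∧
      (∀ e, d.N e (w e) ∈ B ↔ D.tgt e ∈ A) := by
  let B : Set G.V := {y | (∃ x ∈ A, d.p x = y) ∨
    ∃ e j, 0 < j ∧ j < w e ∧ d.N e j = y ∧ D.src e ∈ A}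
  have hp : ∀ x, d.p x ∈ B ↔ x ∈ A := by
    intro x
    constructor
    · rintro (⟨y, hy, h⟩ | ⟨e, j, h1, h2, h3, _⟩)
      · rwa [← d.pinj _ _ h]
      · exact absurd h3 (d.inn _ _ _ h1 h2)
    · intro hx
      exact Or.inl ⟨x, hx, rfl⟩
  refine ⟨B, hp, ?_, ?_⟩
  · intro e j hj
    by_cases h0 : j = 0
    · subst h0
      rw [d.h0, hp]
    · constructor
      · rintro (⟨y, hy, h⟩ | ⟨e', j', h1, h2, h3, h4⟩)
        · exact absurd h.symm (d.inn _ _ _ (by omega) hj)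
        · obtain ⟨rfl, _⟩ := d.Ninj _ _ _ _ h1 h2 (by omega) hj h3
          exact h4
      · intro h
        exact Or.inr ⟨e, j, by omega, hj, rfl, h⟩
  · intro e
    rw [d.h1, hp]

lemma iff_of_ends {G : Multigraph} (B : Set G.V) (g : G.E) (a b : G.V)
    (h : s(G.src g, G.tgt g) = s(a, b)) (hab : a ∈ B ↔ b ∈ B) : G.src g ∈ B ↔ G.tgt g ∈ B := by
  rw [Sym2.eq_iff] at h
  rcases h with ⟨h1, h2⟩ | ⟨h1, h2⟩
  · rw [h1, h2, hab]
  · rw [h1, h2, hab]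

lemma Dat.connected {G D : Multigraph} {w : D.E → ℕ} (d : Dat G D.src D.tgt w)
    (h : G.Connected) : D.Connected := by
  rw [connected_iff] at h ⊢
  intro A hA u v hu
  obtain ⟨B, hp, hN, hT⟩ := d.lift A
  rw [← hp] at hu ⊢
  refine h B ?_ _ _ hu
  intro g
  obtain ⟨e, j, hj, rfl⟩ := d.edsurj g
  refine iff_of_ends B _ _ _ (d.ends e j hj) ?_
  rw [hN e j hj]
  by_cases h1 : j + 1 < w e
  · rw [hN e _ h1]
  · have : j + 1 = w e := by omega
    rw [this, hT, hA]

lemma Dat.bridgeless {G D : Multigraph} {w : D.E → ℕ} (d : Dat G D.src D.tgt w)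
    (h : G.Bridgeless) : D.Bridgeless := by
  intro f
  have h := h (d.ed f (w f - 1))
  rw [not_bridge_iff] at h ⊢
  intro A hA u v hu
  obtain ⟨B, hp, hN, hT⟩ := d.lift A
  rw [← hp] at hu ⊢
  refine h B ?_ _ _ hu
  intro g hg
  obtain ⟨e, j, hj, rfl⟩ := d.edsurj g
  refine iff_of_ends B _ _ _ (d.ends e j hj) ?_
  rw [hN e j hj]
  by_cases h1 : j + 1 < w e
  · rw [hN e _ h1]
  · have h2 : j + 1 = w e := by omega
    rw [h2, hT]
    apply hA
    rintro rfl
    apply hg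
    rw [← h2]
    rfl

lemma Dat.card {G D : Multigraph} {w : D.E → ℕ} (d : Dat G D.src D.tgt w) :
    G.nE + Fintype.card D.V = G.nV + Fintype.card D.E := by
  obtain ⟨i⟩ := d.iso
  have hE : G.nE = ∑ e, w e := by
    have h : G.nE = Fintype.card (Σ f : D.E, Fin (w f)) := Fintype.card_congr i.eMap
    rw [h, Fintype.card_sigma]
    simp
  have hV : G.nV = Fintype.card D.V + ∑ e, (w e - 1) := by
    have h : G.nV = Fintype.card (Quot (zeroRel D w) ⊕ (Σ f : D.E, Fin (w f - 1))) :=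
      Fintype.card_congr i.vMap
    rw [h, Fintype.card_sum, card_quot_of_pos D w d.wpos, Fintype.card_sigma]
    simp
  have : ∑ e, w e = ∑ e, (w e - 1) + Fintype.card D.E := by
    rw [← Finset.card_univ, Finset.card_eq_sum_ones, ← Finset.sum_add_distrib]
    apply Finset.sum_congr rfl
    intro e _
    have := d.wpos e
    omega
  omega

lemma Dat.deg_ne_one {G D : Multigraph} {w : D.E → ℕ} (d : Dat G D.src D.tgt w)
    (h : ∀ v, G.deg v ≠ 1) (x : D.V) : D.deg x ≠ 1 := by
  obtain ⟨i⟩ := iso_symm d.iso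
  rw [← sub_deg_of_pos D w d.wpos x]
  intro h1
  exact h _ ((iso_deg i _).trans h1)

lemma merge0 {G D : Multigraph} {w : D.E → ℕ} (d : Dat G D.src D.tgt w) (v : D.V) (e1 e2 : D.E)
    (hne : e1 ≠ e2) (h : ∀ x, hv D x = v ↔ x = (e1, true) ∨ x = (e2, false)) :
    ∃ (D' : Multigraph) (w' : D'.E → ℕ), Nonempty (Dat G D'.src D'.tgt w') ∧
      Fintype.card D'.V < Fintype.card D.V := by
  have hs : ∀ e, e ≠ e2 → D.src e ≠ v := by
    intro e he h1
    have := (h (e, false)).1 h1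
    simp at this
    exact he this
  have ht : ∀ e, e ≠ e1 → D.tgt e ≠ v := by
    intro e he h1
    have := (h (e, true)).1 h1
    simp at this
    exact he this
  have h1 : D.tgt e1 = v := (h (e1, true)).2 (Or.inl rfl)
  have h2 : D.src e2 = v := (h (e2, false)).2 (Or.inr rfl)
  refine ⟨mg D v e1 e2 hs ht hne, _, ⟨d.mg v e1 e2 hs ht hne h1 h2⟩, ?_⟩
  change Fintype.card {x : D.V // x ≠ v} < _
  exact Fintype.card_subtype_lt (x := v) (by simp)

lemma flip_aux1 {E : Type} (e1 e2 : E) (hne : e1 ≠ e2) (x : E × Bool) :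
    ((x.1, if x.1 = e2 then !x.2 else x.2) = (e1, true) ∨
      (x.1, if x.1 = e2 then !x.2 else x.2) = (e2, true)) ↔ x = (e1, true) ∨ x = (e2, false) := by
  obtain ⟨e, t⟩ := x
  by_cases he : e = e2
  · subst he
    cases t <;> simp [hne.symm]
  · simp [he]

lemma flip_aux2 {E : Type} (e1 : E) (b : E × Bool) (hne : e1 ≠ b.1) (x : E × Bool) :
    ((x.1, if x.1 = e1 then !x.2 else x.2) = (e1, false) ∨
      (x.1, if x.1 = e1 then !x.2 else x.2) = b) ↔ x = (e1, true) ∨ x = b := by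
  obtain ⟨e, t⟩ := x
  obtain ⟨e2, t2⟩ := b
  by_cases he : e = e1
  · subst he
    have : e ≠ e2 := hne
    cases t <;> simp [this]
  · simp [he]

lemma merge1 {G D : Multigraph} {w : D.E → ℕ} (d : Dat G D.src D.tgt w) (v : D.V) (e1 : D.E)
    (b : D.E × Bool)
    (hne : e1 ≠ b.1) (h : ∀ x, hv D x = v ↔ x = (e1, true) ∨ x = b) :
    ∃ (D' : Multigraph) (w' : D'.E → ℕ), Nonempty (Dat G D'.src D'.tgt w') ∧
      Fintype.card D'.V < Fintype.card D.V := by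
  obtain ⟨e2, t⟩ := b
  cases t with
  | false => exact merge0 d v e1 e2 hne h
  | true =>
    refine merge0 (D := flip D e2) (d.flip e2) v e1 e2 hne ?_
    intro x
    refine (iff_of_eq (congrArg (· = v) (flip_hv D e2 x))).trans ((h _).trans ?_)
    exact flip_aux1 e1 e2 hne x

lemma merge {G D : Multigraph} {w : D.E → ℕ} (d : Dat G D.src D.tgt w) (v : D.V)
    (a b : D.E × Bool)
    (hne : a.1 ≠ b.1) (h : ∀ x, hv D x = v ↔ x = a ∨ x = b) :
    ∃ (D' : Multigraph) (w' : D'.E → ℕ), Nonempty (Dat G D'.src D'.tgt w') ∧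
      Fintype.card D'.V < Fintype.card D.V := by
  obtain ⟨e1, t⟩ := a
  cases t with
  | true => exact merge1 d v e1 b hne h
  | false =>
    refine merge1 (D := flip D e1) (d.flip e1) v e1 b hne ?_
    intro x
    refine (iff_of_eq (congrArg (· = v) (flip_hv D e1 x))).trans ((h _).trans ?_)
    exact flip_aux2 e1 b hne x

lemma phase1 (G : Multigraph) (hc : G.Connected) (hd : ∀ v, G.deg v ≠ 1) (hlt : G.nV < G.nE) :
    ∀ (N : ℕ) (D : Multigraph) (w : D.E → ℕ), Fintype.card D.V = N →
      Nonempty (Dat G D.src D.tgt w) →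
      ∃ (D' : Multigraph) (w' : D'.E → ℕ), Nonempty (Dat G D'.src D'.tgt w') ∧
        ∀ v, 3 ≤ D'.deg v := by
  intro N
  induction N using Nat.strong_induction_on with
  | _ N ih =>
    rintro D w rfl ⟨d⟩
    by_cases hall : ∀ v, 3 ≤ D.deg v
    · exact ⟨D, w, ⟨d⟩, hall⟩
    push Not at hall
    obtain ⟨v, hv3⟩ := hall
    have hcard := d.card
    have hconn := (connected_iff D).1 (d.connected hc)
    have hn1 := d.deg_ne_one hd v
    have hdeg := deg_half D v
    -- if `{v}` is closed, everything is at v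
    have hcl : (∀ e, D.src e = v ↔ D.tgt e = v) → D.deg v ≤ 2 → False := by
      intro h1 h2
      have hall : ∀ u, u = v := fun u => hconn {v} h1 v u rfl
      have hE : D.deg v = 2 * Fintype.card D.E := by
        unfold Multigraph.deg
        rw [Finset.filter_true_of_mem (fun e _ => hall _),
          Finset.filter_true_of_mem (fun e _ => hall _), Finset.card_univ]
        omega
      have hV : 0 < Fintype.card D.V := Fintype.card_pos_iff.2 ⟨v⟩
      omega
    have h02 : D.deg v = 0 ∨ D.deg v = 2 := by omega
    rcases h02 with h0 | h2
    · exfalso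
      refine hcl ?_ (by omega)
      rw [h0] at hdeg
      have hdeg := Finset.card_eq_zero.1 hdeg.symm
      have hno : ∀ x, hv D x ≠ v := by
        intro x hx
        have : x ∈ (univ.filter fun h : D.E × Bool => hv D h = v) := by simp [hx]
        rw [hdeg] at this
        simp at this
      intro e
      exact iff_of_false (hno (e, false)) (hno (e, true))
    · rw [h2] at hdeg
      obtain ⟨a, b, hab, hs⟩ := Finset.card_eq_two.1 hdeg.symm
      have hiff : ∀ x, hv D x = v ↔ x = a ∨ x = b := by
        intro x
        have : x ∈ (univ.filter fun h : D.E × Bool => hv D h = v) ↔ x = a ∨ x = b := by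
          rw [hs]; simp
        simpa using this
      by_cases hne : a.1 = b.1
      · exfalso
        refine hcl ?_ (by omega)
        intro e
        refine (hiff (e, false)).trans (Iff.trans ?_ (hiff (e, true)).symm)
        obtain ⟨e1, t1⟩ := a
        obtain ⟨e2, t2⟩ := b
        simp only at hne
        subst hne
        cases t1 <;> cases t2 <;> simp at hab ⊢
      · obtain ⟨D', w', hD', hlt'⟩ := merge d v a b hne hiff
        exact ih _ hlt' D' w' rfl hD'

lemma exists_cubic (B : Prop) (G : Multigraph) (hc : G.Connected) (hd : ∀ v, G.deg v ≠ 1)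
    (hlt : G.nV < G.nE) (hB : B → G.Bridgeless) :
    ∃ D', (∀ v, D'.deg v = 3) ∧ (B → D'.Bridgeless) ∧ IsWeakDistillation D' G := by
  obtain ⟨D, w, ⟨d⟩, h3⟩ := phase1 G hc hd hlt _ G (fun _ => 1) rfl ⟨Dat.init G⟩
  exact phase2 B G _ D w rfl h3 (zeroAcyclic_of_pos D w d.wpos)
    (fun b => d.bridgeless (hB b)) d.iso

lemma deg_ne_one_of_bridgeless (G : Multigraph) (h : G.Bridgeless) (v : G.V) : G.deg v ≠ 1 := by
  intro h1
  have hdeg := deg_half G v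
  rw [h1] at hdeg
  obtain ⟨a, hs⟩ := Finset.card_eq_one.1 hdeg.symm
  have hiff : ∀ x, hv G x = v ↔ x = a := by
    intro x
    have : x ∈ (univ.filter fun h : G.E × Bool => hv G h = v) ↔ x = a := by
      rw [hs]; simp
    simpa using this
  have hb := (not_bridge_iff G a.1).1 (h a.1) {v} (by
    intro e he
    refine (hiff (e, false)).trans (Iff.trans ?_ (hiff (e, true)).symm)
    constructor <;> · rintro rfl; exact absurd rfl he)
  have h2 : (a.1, false) = a := (hiff _).1 (hb v _ rfl)
  have h3 : (a.1, true) = a := (hiff _).1 (hb v _ rfl)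
  have := h2.trans h3.symm
  simp at this

end CWD

/-- (a) G has a cubic weak distillation iff G has no vertex of degree 1;
(b) G has a bridgeless cubic weak distillation iff G is bridgeless. -/
theorem cubic_weak_distillation_iff (n k : ℕ) (hn : 1 ≤ n) (hk : 1 ≤ k)
    (G : Multigraph) (hG : memG G n (n + k)) :
    ((∃ D : Multigraph, (∀ v : D.V, D.deg v = 3) ∧ IsWeakDistillation D G) ↔
      (∀ v : G.V, G.deg v ≠ 1)) ∧
    ((∃ D : Multigraph, (∀ v : D.V, D.deg v = 3) ∧ D.Bridgeless ∧
        IsWeakDistillation D G) ↔ G.Bridgeless) := by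
  obtain ⟨h1, h2, hc⟩ := hG
  have hlt : G.nV < G.nE := by omega
  refine ⟨⟨?_, ?_⟩, ⟨?_, ?_⟩⟩
  · rintro ⟨D, h3, w, hz, ⟨i⟩⟩ v
    rw [← CWD.iso_deg i]
    exact CWD.sub_deg_ne_one D w hz h3 _
  · intro hd
    obtain ⟨D, h3, _, hw⟩ := CWD.exists_cubic False G hc hd hlt False.elim
    exact ⟨D, h3, hw⟩
  · rintro ⟨D, h3, hb, w, hz, hi⟩
    exact CWD.iso_bridgeless hi (CWD.sub_bridgeless D w hb)
  · intro hb
    obtain ⟨D, h3, hb', hw⟩ := CWD.exists_cubic True G hc (CWD.deg_ne_one_of_bridgeless G hb) hlt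
      (fun _ => hb)
    exact ⟨D, h3, hb' trivial, hw⟩
end
end

section
/- For every n ≥ 1 and m = n + 1, there exists a uniquely optimal graph in G_{n,m}: the balanced θ-graph with m edges, i.e. the weak subdivision of the 3-dipole whose three chain lengths differ pairwise by at most one. Explicitly, writing the chain lengths ℓ₁, ℓ₂, ℓ₃ with ℓ₁ + ℓ₂ + ℓ₃ = m, this θ-graph has R(G,p) = p^m + m p^{m−1}(1−p) + (ℓ₁ℓ₂ + ℓ₁ℓ₃ + ℓ₂ℓ₃) p^{m−2}(1−p)², and the coefficient ℓ₁ℓ₂ + ℓ₁ℓ₃ + ℓ₂ℓ₃ is maximized exactly when the chains are balanced. -/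
open Classical Finset

noncomputable section

namespace Theta

/-- Colour form of connectivity after deleting `F`. -/
def K (H : Multigraph) (F : Finset H.E) : Prop :=
  ∀ φ : H.V → Prop, (∀ e, e ∉ F → (φ (H.src e) ↔ φ (H.tgt e))) → ∀ u v, φ u → φ v

theorem K_iff (H : Multigraph) (F : Finset H.E) : K H F ↔ H.ConnOn (Finset.univ \ F) := by
  constructor
  · intro h u v
    refine h (fun x => Relation.ReflTransGen (H.stepOn (Finset.univ \ F)) u x) ?_ u v
      Relation.ReflTransGen.refl
    intro e he
    have he' : e ∈ Finset.univ \ F := by simpa using he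
    constructor
    · intro h1
      exact h1.tail ⟨e, he', Or.inl ⟨rfl, rfl⟩⟩
    · intro h1
      exact h1.tail ⟨e, he', Or.inr ⟨rfl, rfl⟩⟩
  · intro h φ hφ u v hu
    have := h u v
    induction this with
    | refl => exact hu
    | tail _ hs ih =>
      obtain ⟨e, he, hh⟩ := hs
      have he' : e ∉ F := by simpa using he
      have := hφ e he'
      rcases hh with ⟨h1, h2⟩ | ⟨h1, h2⟩
      · rw [← h2]; rw [← h1] at ih; exact this.1 ih
      · rw [← h1]; rw [← h2] at ih; exact this.2 ih

theorem K_mono {H : Multigraph} {F F' : Finset H.E} (h : F ⊆ F') (hK : K H F') : K H F :=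
  fun φ hφ => hK φ fun e he => hφ e fun h' => he (h h')

theorem K_card {H : Multigraph} [Nonempty H.V] {F : Finset H.E} (h : K H F) :
    H.nV + F.card ≤ H.nE + 1 := by
  rw [K_iff] at h
  set S := Finset.univ \ F with hS
  let G : SimpleGraph H.V := SimpleGraph.fromRel (H.stepOn S)
  have hc : G.Connected := by
    refine SimpleGraph.Connected.mk ?_
    intro u v
    have := h u v
    induction this with
    | refl => exact SimpleGraph.Reachable.refl _
    | @tail b c _ hs ih =>
      by_cases hbc : b = c
      · exact hbc ▸ ih
      · refine ih.trans (SimpleGraph.Adj.reachable ?_)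
        exact (SimpleGraph.fromRel_adj _ _ _).2 ⟨hbc, Or.inl hs⟩
  have h1 := hc.card_vert_le_card_edgeSet_add_one
  have h2 : Nat.card G.edgeSet ≤ S.card := by
    have hsub : G.edgeSet ⊆ ((S.image fun e => s(H.src e, H.tgt e) : Finset (Sym2 H.V)) : Set (Sym2 H.V)) := by
      intro x
      induction x using Sym2.ind with
      | _ a b =>
        intro hx
        have hx' : G.Adj a b := hx
        rw [SimpleGraph.fromRel_adj] at hx'
        simp only [coe_image, Set.mem_image, mem_coe]
        rcases hx' with ⟨_, ⟨e, he, hh⟩ | ⟨e, he, hh⟩⟩ <;> refine ⟨e, he, ?_⟩ <;>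
          rcases hh with ⟨h1, h2⟩ | ⟨h1, h2⟩ <;> rw [h1, h2] <;> first | rfl | exact Sym2.eq_swap
    calc Nat.card G.edgeSet = G.edgeSet.ncard := rfl
      _ ≤ _ := Set.ncard_le_ncard hsub (Finset.finite_toSet _)
      _ = _ := Set.ncard_coe_finset _
      _ ≤ _ := Finset.card_image_le
  have h3 : S.card + F.card = H.nE := by
    rw [hS]
    have := Finset.card_sdiff_add_card_eq_card (Finset.subset_univ F)
    simpa [Multigraph.nE] using this
  have h4 : Nat.card H.V = H.nV := Nat.card_eq_fintype_card
  omega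

/-- Number of connected deletions of `j` edges. -/
def cnt (H : Multigraph) (j : ℕ) : ℕ :=
  ((Finset.univ : Finset (Finset H.E)).filter fun F => F.card = j ∧ K H F).card

theorem rel_eq (H : Multigraph) (p : ℝ) :
    H.rel p = ∑ j ∈ Finset.range (H.nE + 1), (cnt H j : ℝ) * (p ^ (H.nE - j) * (1 - p) ^ j) := by
  unfold Multigraph.rel
  have h1 : ∑ S : Finset H.E, (if H.ConnOn S then p ^ S.card * (1 - p) ^ (H.nE - S.card) else 0)
      = ∑ F : Finset H.E, (if K H F then p ^ (H.nE - F.card) * (1 - p) ^ F.card else 0) := by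
    refine Fintype.sum_equiv (Equiv.mk (fun S => Sᶜ) (fun S => Sᶜ) (fun S => compl_compl S)
      (fun S => compl_compl S)) _ _ ?_
    intro S
    simp only [Equiv.coe_fn_mk]
    have : K H Sᶜ ↔ H.ConnOn S := by
      rw [K_iff]
      have : Finset.univ \ Sᶜ = S := by ext; simp
      rw [this]
    have hle : S.card ≤ H.nE := Finset.card_le_univ S
    have hc : Sᶜ.card = H.nE - S.card := Finset.card_compl S
    have h5 : H.nE - (H.nE - S.card) = S.card := by omega
    simp only [this, hc, h5]
  rw [h1]
  rw [← Finset.sum_fiberwise_of_maps_to (s := Finset.univ) (t := Finset.range (H.nE + 1))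
    (g := fun F : Finset H.E => F.card)]
  · refine Finset.sum_congr rfl fun j _ => ?_
    rw [← Finset.sum_filter, Finset.filter_filter, Finset.sum_congr rfl
      (g := fun _ => p ^ (H.nE - j) * (1 - p) ^ j)]
    · rw [Finset.sum_const, nsmul_eq_mul, cnt]
    · intro F hF
      simp only [mem_filter, mem_univ, true_and] at hF
      rw [hF.1]
  · intro F _
    have := Finset.card_le_univ F
    simp only [mem_range, Multigraph.nE]; omega

theorem rel_eq' (H : Multigraph) [Nonempty H.V] (hE : H.nE = H.nV + 1) (hc : K H ∅) (p : ℝ) :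
    H.rel p = p ^ H.nE + (cnt H 1 : ℝ) * p ^ (H.nE - 1) * (1 - p) +
      (cnt H 2 : ℝ) * p ^ (H.nE - 2) * (1 - p) ^ 2 := by
  rw [rel_eq]
  have hV : 0 < H.nV := Fintype.card_pos
  rw [← Finset.sum_subset (s₁ := Finset.range 3)]
  · have h0 : cnt H 0 = 1 := by
      unfold cnt
      rw [Finset.card_eq_one]
      refine ⟨∅, ?_⟩
      ext F
      simp only [mem_filter, mem_univ, true_and, Finset.mem_singleton, Finset.card_eq_zero]
      constructor
      · exact fun h => h.1
      · rintro rfl; exact ⟨rfl, hc⟩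
    simp only [Finset.sum_range_succ, Finset.sum_range_zero, h0]
    simp
    ring
  · intro j hj
    simp only [mem_range] at *; omega
  · intro j _ hj
    have : cnt H j = 0 := by
      unfold cnt
      rw [Finset.card_eq_zero, Finset.filter_eq_empty_iff]
      rintro F - ⟨h1, h2⟩
      have := K_card h2
      simp only [mem_range] at hj
      omega
    rw [this]; simp

theorem cnt_one_le (H : Multigraph) : cnt H 1 ≤ H.nE := by
  unfold cnt
  calc _ ≤ (Finset.powersetCard 1 (Finset.univ : Finset H.E)).card := by
        apply Finset.card_le_card
        intro F hF
        simp only [mem_filter, mem_univ, true_and] at hF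
        simp [Finset.mem_powersetCard, hF.1]
    _ = _ := by simp [Multigraph.nE]

theorem cnt_one_lt (H : Multigraph) (e : H.E) (he : ¬ K H {e}) : cnt H 1 < H.nE := by
  unfold cnt
  calc _ < (Finset.powersetCard 1 (Finset.univ : Finset H.E)).card := by
        apply Finset.card_lt_card
        rw [Finset.ssubset_iff_of_subset]
        · exact ⟨{e}, by simp [Finset.mem_powersetCard], by simp [he]⟩
        intro F hF
        simp only [mem_filter, mem_univ, true_and] at hF
        simp [Finset.mem_powersetCard, hF.1]
    _ = _ := by simp [Multigraph.nE]

theorem cnt_one_eq (H : Multigraph) (h : ∀ e, K H {e}) : cnt H 1 = H.nE := by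
  unfold cnt
  calc _ = (Finset.powersetCard 1 (Finset.univ : Finset H.E)).card := by
        congr 1
        ext F
        simp only [mem_filter, mem_univ, true_and, Finset.mem_powersetCard, subset_univ]
        constructor
        · exact fun h => h.1
        · intro h1
          obtain ⟨e, rfl⟩ := Finset.card_eq_one.1 h1
          exact ⟨h1, h e⟩
    _ = _ := by simp [Multigraph.nE]

theorem K_iso {G H : Multigraph} (I : MGIso G H) (F : Finset G.E) (h : K G F) :
    K H (F.map I.eMap.toEmbedding) := by
  intro φ hφ u v hu
  have := h (fun x => φ (I.vMap x)) ?_ (I.vMap.symm u) (I.vMap.symm v) (by simpa using hu)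
  · simpa using this
  · intro e he
    have h1 := hφ (I.eMap e) (by simpa using he)
    rcases I.ends_eq e with ⟨h2, h3⟩ | ⟨h2, h3⟩
    · rw [← h2, ← h3]; exact h1
    · rw [← h2, ← h3]; exact h1.symm

theorem cnt_le_iso {G H : Multigraph} (I : MGIso G H) (j : ℕ) : cnt G j ≤ cnt H j := by
  unfold cnt
  refine Finset.card_le_card_of_injOn (fun F => F.map I.eMap.toEmbedding) ?_ ?_
  · intro F hF
    simp only [coe_filter, mem_univ, true_and, Set.mem_ofPred_eq] at hF ⊢
    exact ⟨by simpa using hF.1, K_iso I F hF.2⟩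
  · intro F _ F' _ h
    exact Finset.map_injective _ h

def isoSymm {G H : Multigraph} (I : MGIso G H) : MGIso H G where
  vMap := I.vMap.symm
  eMap := I.eMap.symm
  ends_eq e := by
    have := I.ends_eq (I.eMap.symm e)
    simp only [Equiv.apply_symm_apply] at this
    rcases this with ⟨h1, h2⟩ | ⟨h1, h2⟩
    · left; rw [h1, h2]; simp
    · right; rw [h1, h2]; simp

theorem cnt_iso {G H : Multigraph} (I : MGIso G H) (j : ℕ) : cnt G j = cnt H j :=
  le_antisymm (cnt_le_iso I j) (cnt_le_iso (isoSymm I) j)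

/-- `e` joins `x` and `y`. -/
def Joins (H : Multigraph) (e : H.E) (x y : H.V) : Prop :=
  (H.src e = x ∧ H.tgt e = y) ∨ (H.src e = y ∧ H.tgt e = x)

/-- Contraction of the edge `e` joining `x` to `y`, absorbing `x` into `y`. -/
def ctr (H : Multigraph) (e : H.E) (x y : H.V) (h : y ≠ x) : Multigraph where
  V := {u : H.V // u ≠ x}
  E := {g : H.E // g ≠ e}
  src g := if h' : H.src g.1 = x then ⟨y, h⟩ else ⟨H.src g.1, h'⟩
  tgt g := if h' : H.tgt g.1 = x then ⟨y, h⟩ else ⟨H.tgt g.1, h'⟩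

theorem ctr_nV (H : Multigraph) (e : H.E) (x y : H.V) (h : y ≠ x) :
    (ctr H e x y h).nV + 1 = H.nV := by
  have : 0 < Fintype.card H.V := Fintype.card_pos_iff.2 ⟨x⟩
  have h1 : Fintype.card {u : H.V // u ≠ x} = Fintype.card H.V - 1 := by
    simp [Fintype.card_subtype_compl]
  have h2 : (ctr H e x y h).nV = Fintype.card {u : H.V // u ≠ x} := by
    unfold Multigraph.nV ctr
    exact Fintype.card_congr (Equiv.refl _)
  rw [h2, h1]; unfold Multigraph.nV; omega

theorem ctr_nE (H : Multigraph) (e : H.E) (x y : H.V) (h : y ≠ x) :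
    (ctr H e x y h).nE + 1 = H.nE := by
  have : 0 < Fintype.card H.E := Fintype.card_pos_iff.2 ⟨e⟩
  have h1 : Fintype.card {u : H.E // u ≠ e} = Fintype.card H.E - 1 := by
    simp [Fintype.card_subtype_compl]
  have h2 : (ctr H e x y h).nE = Fintype.card {u : H.E // u ≠ e} := by
    unfold Multigraph.nE ctr
    exact Fintype.card_congr (Equiv.refl _)
  rw [h2, h1]; unfold Multigraph.nE; omega

theorem ctr_K {H : Multigraph} {e : H.E} {x y : H.V} (h : y ≠ x) (hj : Joins H e x y)
    {F : Finset H.E} {F' : Finset (ctr H e x y h).E} (hF : ∀ g : (ctr H e x y h).E, g ∈ F' → g.1 ∈ F)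
    (hK : K H F) : K (ctr H e x y h) F' := by
  intro φ hφ u v hu
  have hs : ∀ w : {u : H.V // u ≠ x}, (if h' : w.1 = x then (⟨y, h⟩ : {u : H.V // u ≠ x}) else ⟨w.1, h'⟩) = w := by
    intro w; rw [dif_neg w.2]
  have := hK (fun w => φ (if h' : w = x then (⟨y, h⟩ : {u : H.V // u ≠ x}) else ⟨w, h'⟩)) ?_ u.1 v.1
    ((congrArg φ (hs u)).mpr hu)
  · exact (congrArg φ (hs v)).mp this
  · intro g hg
    by_cases hge : g = e
    · subst hge
      rcases hj with ⟨h1, h2⟩ | ⟨h1, h2⟩ <;> simp [h1, h2, h]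
    · exact hφ ⟨g, hge⟩ (fun h' => hg (hF _ h'))

theorem K_of_ctr {H : Multigraph} {e : H.E} {x y : H.V} (h : y ≠ x) (hj : Joins H e x y)
    {F : Finset H.E} {F' : Finset (ctr H e x y h).E} (he : e ∉ F)
    (hF : ∀ g : (ctr H e x y h).E, g.1 ∈ F → g ∈ F')
    (hK : K (ctr H e x y h) F') : K H F := by
  intro φ hφ
  have hxy : φ x ↔ φ y := by
    have := hφ e he
    rcases hj with ⟨h1, h2⟩ | ⟨h1, h2⟩ <;> rw [h1, h2] at this
    · exact this
    · exact this.symm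
  have key := hK (fun w => φ w.1) (by
    intro g hg
    have h1 := hφ g.1 (fun h' => hg (hF _ h'))
    have h2 : φ ((ctr H e x y h).src g).1 ↔ φ (H.src g.1) := by
      simp only [ctr]; split_ifs with h3
      · rw [h3]; exact hxy.symm
      · rfl
    have h2' : φ ((ctr H e x y h).tgt g).1 ↔ φ (H.tgt g.1) := by
      simp only [ctr]; split_ifs with h3
      · rw [h3]; exact hxy.symm
      · rfl
    rw [h2, h2']; exact h1)
  have key' : ∀ v, v ≠ x → (φ y ↔ φ v) := fun v hv =>
    ⟨key ⟨y, h⟩ ⟨v, hv⟩, key ⟨v, hv⟩ ⟨y, h⟩⟩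
  have key2 : ∀ v, (φ y ↔ φ v) := by
    intro v
    by_cases hv : v = x
    · rw [hv]; exact hxy.symm
    · exact key' v hv
  intro u v hu
  exact (key2 v).1 ((key2 u).2 hu)

theorem cnt_ctr_le {H : Multigraph} {e : H.E} {x y : H.V} (h : y ≠ x) (hj : Joins H e x y)
    (he : ¬ K H {e}) (j : ℕ) : cnt H j ≤ cnt (ctr H e x y h) j := by
  unfold cnt
  have hne : ∀ F : Finset H.E, K H F → e ∉ F := fun F hF heF =>
    he (K_mono (by simpa using heF) hF)
  refine Finset.card_le_card_of_injOn
    (fun F => (F.subtype (fun g => g ≠ e) : Finset {g : H.E // g ≠ e})) ?_ ?_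
  · intro F hF
    simp only [coe_filter, mem_univ, true_and, Set.mem_ofPred_eq] at hF ⊢
    refine ⟨?_, ctr_K (F := F) h hj ?_ hF.2⟩
    · refine Eq.trans ?_ hF.1
      refine (Finset.card_subtype (fun g => g ≠ e) F).trans ?_
      rw [Finset.filter_true_of_mem]
      intro g hg hge
      exact hne F hF.2 (hge ▸ hg)
    · intro g hg
      exact Finset.mem_subtype.1 hg
  · intro F hF F' hF' hh
    simp only [coe_filter, mem_univ, true_and, Set.mem_ofPred_eq] at hF hF'
    ext g
    by_cases hg : g = e
    · subst hg
      exact ⟨fun h => absurd h (hne F hF.2), fun h => absurd h (hne F' hF'.2)⟩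
    · have := congrArg (fun A : Finset {g : H.E // g ≠ e} => (⟨g, hg⟩ : {g : H.E // g ≠ e}) ∈ A) hh
      simpa using this

/-- A presentation of `H` as three chains with common ends. -/
structure Model (H : Multigraph) (w : Fin 3 → ℕ) where
  node : Fin 3 → ℕ → H.V
  edge : Fin 3 → ℕ → H.E
  s : H.V
  t : H.V
  node_zero : ∀ i, node i 0 = s
  node_last : ∀ i, node i (w i) = t
  joins : ∀ i k, k < w i → Joins H (edge i k) (node i k) (node i (k + 1))
  surjE : ∀ e, ∃ i k, k < w i ∧ edge i k = e
  surjV : ∀ v, ∃ i k, k ≤ w i ∧ node i k = v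
  sum_eq : w 0 + w 1 + w 2 = H.nE
  pos : ∀ i j, i ≠ j → 0 < w i + w j

def Model.perm {H : Multigraph} {w : Fin 3 → ℕ} (M : Model H w) (σ : Equiv.Perm (Fin 3)) :
    Model H (w ∘ σ) where
  node i := M.node (σ i)
  edge i := M.edge (σ i)
  s := M.s
  t := M.t
  node_zero i := M.node_zero _
  node_last i := M.node_last _
  joins i k h := M.joins _ k h
  surjE e := by
    obtain ⟨i, k, h, h'⟩ := M.surjE e
    exact ⟨σ.symm i, k, by simpa using h, by simpa using h'⟩
  surjV e := by
    obtain ⟨i, k, h, h'⟩ := M.surjV e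
    exact ⟨σ.symm i, k, by simpa using h, by simpa using h'⟩
  sum_eq := by
    rw [← M.sum_eq, ← Fin.sum_univ_three, ← Fin.sum_univ_three]
    exact Equiv.sum_comp σ w
  pos i j h := M.pos _ _ (fun h' => h (σ.injective h'))

theorem sub_nE (w : Fin 3 → ℕ) : (subdivide dipole3 w).nE = w 0 + w 1 + w 2 := by
  have : (subdivide dipole3 w).nE = Fintype.card (Σ f : Fin 3, Fin (w f)) :=
    Fintype.card_congr (Equiv.refl _)
  rw [this, Fintype.card_sigma, Fin.sum_univ_three]; simp

theorem quot_card (w : Fin 3 → ℕ) (hw : ∀ i j, i ≠ j → 0 < w i + w j) :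
    Fintype.card (Quot (zeroRel dipole3 w)) +
      (Finset.univ.filter fun e : Fin 3 => w e = 0).card = 2 := by
  by_cases h : ∃ i, w i = 0
  · obtain ⟨i, hi⟩ := h
    have h1 : (Finset.univ.filter fun e : Fin 3 => w e = 0) = {i} := by
      ext j
      simp only [mem_filter, mem_univ, true_and, Finset.mem_singleton]
      constructor
      · intro hj
        by_contra hne
        have := hw _ _ hne
        omega
      · rintro rfl; exact hi
    have h2 : ∀ q : Quot (zeroRel dipole3 w), q = Quot.mk _ (0 : Fin 2) := by
      intro q
      obtain ⟨u, rfl⟩ := Quot.exists_rep q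
      have hu : ∀ u : Fin 2, u = 0 ∨ u = 1 := by decide
      rcases hu u with h | h
      · rw [h]; rfl
      · rw [h]; exact (Quot.sound ⟨i, hi, rfl, rfl⟩).symm
    have h3 : Fintype.card (Quot (zeroRel dipole3 w)) = 1 :=
      Fintype.card_eq_one_iff.2 ⟨_, h2⟩
    rw [h1, h3]; rfl
  · have h1 : (Finset.univ.filter fun e : Fin 3 => w e = 0) = ∅ := by
      rw [Finset.filter_eq_empty_iff]
      intro e _ he
      exact h ⟨e, he⟩
    have h3 : Fintype.card (Quot (zeroRel dipole3 w)) = Fintype.card (Fin 2) := by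
      refine Fintype.card_congr ⟨Quot.lift (fun u : Fin 2 => u) ?_, fun u => Quot.mk _ u, ?_, ?_⟩
      · rintro a b ⟨e, he, _⟩
        exact absurd ⟨e, he⟩ h
      · rintro ⟨u⟩; rfl
      · intro u; rfl
    rw [h1, h3]; rfl

theorem zeroAcyclic (w : Fin 3 → ℕ) (hw : ∀ i j, i ≠ j → 0 < w i + w j) :
    ZeroAcyclic dipole3 w := by
  have := quot_card w hw
  unfold ZeroAcyclic
  have h2 : Fintype.card dipole3.V = 2 := Fintype.card_fin 2
  rw [h2, ← this]
  congr 1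

theorem sub_nV (w : Fin 3 → ℕ) (hw : ∀ i j, i ≠ j → 0 < w i + w j) :
    (subdivide dipole3 w).nV + 1 = w 0 + w 1 + w 2 := by
  have h0 : (subdivide dipole3 w).nV = Fintype.card (Quot (zeroRel dipole3 w)) +
      Fintype.card (Σ f : Fin 3, Fin (w f - 1)) := by
    rw [← Fintype.card_sum]
    exact Fintype.card_congr (Equiv.refl _)
  rw [h0, Fintype.card_sigma, Fin.sum_univ_three]
  have h1 := quot_card w hw
  have h2 : (Finset.univ.filter fun e : Fin 3 => w e = 0).card =
      (if w 0 = 0 then 1 else 0) + (if w 1 = 0 then 1 else 0) + (if w 2 = 0 then 1 else 0) := by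
    rw [Finset.card_filter, Fin.sum_univ_three]
  rw [h2] at h1
  have h3 := hw 0 1 (by decide)
  have h4 := hw 0 2 (by decide)
  have h5 := hw 1 2 (by decide)
  simp only [Fintype.card_fin]
  split_ifs at h1 <;> omega

theorem cn_zero (w : Fin 3 → ℕ) (i : Fin 3) :
    chainNode dipole3 w i 0 = Sum.inl (Quot.mk _ (0 : Fin 2)) := by
  unfold chainNode
  simp only [lt_irrefl, false_and, dite_false, if_true]
  rfl

theorem cn_last (w : Fin 3 → ℕ) (i : Fin 3) :
    chainNode dipole3 w i (w i) = Sum.inl (Quot.mk _ (1 : Fin 2)) := by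
  unfold chainNode
  rw [dif_neg (by omega)]
  split_ifs with h
  · exact congrArg Sum.inl (Quot.sound ⟨i, h, rfl, rfl⟩)
  · rfl

theorem cn_mid (w : Fin 3 → ℕ) (i : Fin 3) (k : ℕ) (h : k < w i - 1) :
    chainNode dipole3 w i (k + 1) = Sum.inr ⟨i, ⟨k, h⟩⟩ := by
  unfold chainNode
  rw [dif_pos (by omega)]
  rfl

/-- The vertex map of a model. -/
def Model.vf {H : Multigraph} {w : Fin 3 → ℕ} (M : Model H w) :
    Quot (zeroRel dipole3 w) ⊕ (Σ f : Fin 3, Fin (w f - 1)) → H.V :=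
  Sum.elim (Quot.lift (fun u : Fin 2 => if u = 0 then M.s else M.t) (by
    rintro a b ⟨e, he, rfl, rfl⟩
    have h1 := M.node_zero e
    have h2 := M.node_last e
    have he' : w e = 0 := he
    rw [he', h1] at h2
    simp [h2])) (fun x => M.node x.1 (x.2.val + 1))

theorem Model.vf_cn {H : Multigraph} {w : Fin 3 → ℕ} (M : Model H w) (i : Fin 3) (k : ℕ)
    (hk : k ≤ w i) : M.vf (chainNode dipole3 w i k) = M.node i k := by
  rcases Nat.eq_zero_or_pos k with rfl | hk0
  · rw [cn_zero, M.node_zero]; rfl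
  · rcases Nat.lt_or_ge k (w i) with h | h
    · obtain ⟨k, rfl⟩ : ∃ k', k = k' + 1 := ⟨k - 1, by omega⟩
      rw [cn_mid w i k (by omega)]; rfl
    · have : k = w i := by omega
      subst this
      rw [cn_last, M.node_last]; rfl

theorem Model.edge_bij {H : Multigraph} {w : Fin 3 → ℕ} (M : Model H w) :
    Function.Bijective (fun x : Σ f : Fin 3, Fin (w f) => M.edge x.1 x.2.val) := by
  rw [Fintype.bijective_iff_surjective_and_card]
  constructor
  · intro e
    obtain ⟨i, k, h, h'⟩ := M.surjE e
    exact ⟨⟨i, k, h⟩, h'⟩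
  · rw [Fintype.card_sigma, Fin.sum_univ_three]
    simp only [Fintype.card_fin]
    exact M.sum_eq

theorem Model.iso {H : Multigraph} {w : Fin 3 → ℕ} (M : Model H w) (hE : H.nE = H.nV + 1) :
    Nonempty (MGIso (subdivide dipole3 w) H) := by
  have hv : Function.Bijective (M.vf : (subdivide dipole3 w).V → H.V) := by
    rw [Fintype.bijective_iff_surjective_and_card]
    constructor
    · intro v
      obtain ⟨i, k, h, h'⟩ := M.surjV v
      exact ⟨chainNode dipole3 w i k, (M.vf_cn i k h).trans h'⟩
    · have h1 := sub_nV w M.pos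
      have h2 := M.sum_eq
      have : (subdivide dipole3 w).nV = H.nV := by omega
      exact this
  refine ⟨⟨Equiv.ofBijective _ hv, Equiv.ofBijective _ M.edge_bij, ?_⟩⟩
  rintro ⟨i, k, hk⟩
  have h1 := M.vf_cn i k hk.le
  have h2 := M.vf_cn i (k + 1) hk
  have := M.joins i k hk
  rcases this with ⟨h3, h4⟩ | ⟨h3, h4⟩
  · left
    exact ⟨h3.trans h1.symm, h4.trans h2.symm⟩
  · right
    exact ⟨h3.trans h2.symm, h4.trans h1.symm⟩

theorem chain_aux (g : ℕ → Prop) (W a : ℕ) (h : ∀ k, k < W → k ≠ a → (g k ↔ g (k + 1))) :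
    ∀ k, k ≤ W → ((g k ↔ g 0) ∨ (g k ↔ g W)) := by
  have h1 : ∀ k, k ≤ W → k ≤ a → (g k ↔ g 0) := by
    intro k
    induction k with
    | zero => intros; rfl
    | succ k ih =>
      intro h1 h2
      rw [← ih (by omega) (by omega)]
      exact (h k (by omega) (by omega)).symm
  have h2 : ∀ d k, k + d = W → a < k → (g k ↔ g W) := by
    intro d
    induction d with
    | zero => intro k h _; rw [← h]; rfl
    | succ d ih =>
      intro k h1 h2
      rw [← ih (k + 1) (by omega) (by omega)]
      exact h k (by omega) (by omega)
  intro k hk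
  by_cases hka : k ≤ a
  · exact Or.inl (h1 k hk hka)
  · exact Or.inr (h2 (W - k) k (by omega) (by omega))

theorem chain_aux2 (g : ℕ → Prop) (W : ℕ) (h : ∀ k, k < W → (g k ↔ g (k + 1))) :
    g 0 ↔ g W := by
  induction W with
  | zero => rfl
  | succ W ih => exact (ih fun k hk => h k (by omega)).trans (h W (by omega))

theorem sub_vert (w : Fin 3 → ℕ) (v : (subdivide dipole3 w).V) :
    ∃ i k, k ≤ w i ∧ chainNode dipole3 w i k = v := by
  rcases v with q | ⟨i, l, hl⟩
  · obtain ⟨u, rfl⟩ := Quot.exists_rep q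
    have hu : ∀ u : Fin 2, u = 0 ∨ u = 1 := by decide
    rcases hu u with h | h
    · exact ⟨0, 0, by omega, by rw [cn_zero, h]; rfl⟩
    · exact ⟨0, w 0, le_rfl, by rw [cn_last, h]; rfl⟩
  · exact ⟨i, l + 1, by have : l < w i - 1 := hl
                        omega, cn_mid w i l hl⟩

/-- An edge of the theta graph. -/
def te (w : Fin 3 → ℕ) (i : Fin 3) (k : ℕ) (h : k < w i) : (subdivide dipole3 w).E := ⟨i, ⟨k, h⟩⟩

theorem te_eta (w : Fin 3 → ℕ) (e : (subdivide dipole3 w).E) :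
    ∃ (i : Fin 3) (k : ℕ) (h : k < w i), e = te w i k h := by
  rcases e with ⟨i, k, h⟩
  exact ⟨i, k, h, rfl⟩

theorem te_inj (w : Fin 3 → ℕ) {i i' : Fin 3} {k k' : ℕ} {h : k < w i} {h' : k' < w i'}
    (hh : te w i k h = te w i' k' h') : i = i' ∧ k = k' := by
  unfold te at hh
  have h1 := Sigma.mk.inj_iff.1 hh
  obtain ⟨rfl, h2⟩ := h1
  have := eq_of_heq h2
  exact ⟨rfl, by simpa using this⟩

theorem sub_K (w : Fin 3 → ℕ) {i i' : Fin 3} (hi : i ≠ i') {a b : ℕ} (ha : a < w i)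
    (hb : b < w i') : K (subdivide dipole3 w) {te w i a ha, te w i' b hb} := by
  intro φ hφ
  have hstep : ∀ j k (hk : k < w j), te w j k hk ∉ ({te w i a ha, te w i' b hb} : Finset (subdivide dipole3 w).E) →
      (φ (chainNode dipole3 w j k) ↔ φ (chainNode dipole3 w j (k + 1))) :=
    fun j k hk h => hφ (te w j k hk) h
  have hex : ∀ i i' : Fin 3, i ≠ i' → ∃ j, j ≠ i ∧ j ≠ i' := by decide
  obtain ⟨j, hj, hj'⟩ := hex i i' hi
  have hst : φ (chainNode dipole3 w j 0) ↔ φ (chainNode dipole3 w j (w j)) := by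
    refine chain_aux2 (fun k => φ (chainNode dipole3 w j k)) (w j) fun k hk => hstep j k hk ?_
    simp only [Finset.mem_insert, Finset.mem_singleton, not_or]
    exact ⟨fun h => hj (te_inj w h).1, fun h => hj' (te_inj w h).1⟩
  rw [cn_zero, cn_last] at hst
  have hall : ∀ j k, k ≤ w j →
      (φ (chainNode dipole3 w j k) ↔ φ (Sum.inl (Quot.mk _ (0 : Fin 2)))) := by
    intro j k hk
    have := chain_aux (fun k => φ (chainNode dipole3 w j k)) (w j) (if j = i then a else b) (by
      intro k hk hne
      refine hstep j k hk ?_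
      simp only [Finset.mem_insert, Finset.mem_singleton, not_or]
      constructor
      · intro h
        obtain ⟨h1, h2⟩ := te_inj w h
        exact hne (by rw [if_pos h1, h2])
      · intro h
        obtain ⟨h1, h2⟩ := te_inj w h
        exact hne (by rw [if_neg (by rw [h1]; exact hi.symm), h2])) k hk
    simp only [cn_zero, cn_last] at this
    rcases this with h | h
    · exact h
    · exact h.trans hst.symm
  intro u v hu
  obtain ⟨j, k, hk, rfl⟩ := sub_vert w u
  obtain ⟨j', k', hk', rfl⟩ := sub_vert w v
  exact (hall j' k' hk').2 ((hall j k hk).1 hu)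

theorem sub_not_K (w : Fin 3 → ℕ) {i : Fin 3} {a b : ℕ} (hab : a < b) (ha : a < w i)
    (hb : b < w i) : ¬ K (subdivide dipole3 w) {te w i a ha, te w i b hb} := by
  intro hK
  let φ : Quot (zeroRel dipole3 w) ⊕ (Σ f : Fin 3, Fin (w f - 1)) → Prop :=
    Sum.elim (fun _ => False) (fun y => y.1 = i ∧ a ≤ y.2.val ∧ y.2.val < b)
  have hφ : ∀ j k, k ≤ w j → (φ (chainNode dipole3 w j k) ↔ (j = i ∧ a < k ∧ k ≤ b)) := by
    intro j k hk
    rcases Nat.eq_zero_or_pos k with rfl | hk0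
    · rw [cn_zero]
      change False ↔ _
      simp
    · rcases Nat.lt_or_ge k (w j) with h | h
      · obtain ⟨k, rfl⟩ : ∃ k', k = k' + 1 := ⟨k - 1, by omega⟩
        rw [cn_mid w j k (by omega)]
        change (j = i ∧ a ≤ k ∧ k < b) ↔ _
        constructor
        · rintro ⟨h1, h2, h3⟩; exact ⟨h1, by omega, by omega⟩
        · rintro ⟨h1, h2, h3⟩; exact ⟨h1, by omega, by omega⟩
      · have : k = w j := by omega
        subst this
        rw [cn_last]
        change False ↔ _
        rw [false_iff]
        rintro ⟨rfl, h2, h3⟩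
        omega
  have h1 := hK φ (by
    intro e he
    obtain ⟨j, k, hk, rfl⟩ := te_eta w e
    have h1 := hφ j k hk.le
    have h2 := hφ j (k + 1) hk
    refine h1.trans (Iff.trans ?_ h2.symm)
    simp only [Finset.mem_insert, Finset.mem_singleton, not_or] at he
    have h3 : j = i → k ≠ a := by
      rintro rfl rfl; exact he.1 rfl
    have h4 : j = i → k ≠ b := by
      rintro rfl rfl; exact he.2 rfl
    constructor
    · rintro ⟨h5, h6, h7⟩
      have := h3 h5
      have := h4 h5
      exact ⟨h5, by omega, by omega⟩
    · rintro ⟨h5, h6, h7⟩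
      have := h3 h5
      have := h4 h5
      exact ⟨h5, by omega, by omega⟩) (chainNode dipole3 w i (a + 1)) (chainNode dipole3 w i 0)
    ((hφ _ _ ha).2 ⟨rfl, by omega, by omega⟩)
  have := (hφ i 0 (by omega)).1 h1
  omega

theorem sub_K_iff (w : Fin 3 → ℕ) (e f : (subdivide dipole3 w).E) (hef : e ≠ f) :
    K (subdivide dipole3 w) {e, f} ↔ (e.1 : Fin 3) ≠ f.1 := by
  obtain ⟨i, a, ha, rfl⟩ := te_eta w e
  obtain ⟨i', b, hb, rfl⟩ := te_eta w f
  constructor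
  · intro hK h
    have h' : i = i' := h
    subst h'
    have hab : a ≠ b := by rintro rfl; exact hef rfl
    rcases Nat.lt_or_gt_of_ne hab with h1 | h1
    · exact sub_not_K w h1 ha hb hK
    · rw [Finset.pair_comm] at hK
      exact sub_not_K w h1 hb ha hK
  · intro h
    exact sub_K w h ha hb

def e2 (w : Fin 3 → ℕ) : ℕ := w 0 * w 1 + w 0 * w 2 + w 1 * w 2

theorem pair_aux {α : Type} {a b c d : α} (h : ({a, b} : Finset α) = {c, d}) :
    (a = c ∨ a = d) ∧ (b = c ∨ b = d) := by
  have he : a ∈ ({c, d} : Finset α) := by rw [← h]; simp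
  have hf : b ∈ ({c, d} : Finset α) := by rw [← h]; simp
  simpa using And.intro he hf

theorem sub_cnt2 (w : Fin 3 → ℕ) : cnt (subdivide dipole3 w) 2 = e2 w := by
  let E := Σ f : Fin 3, Fin (w f)
  have h1 : ((Finset.univ : Finset (E × E)).filter fun p => p.1.1 < p.2.1).card = e2 w := by
    rw [Finset.card_filter, Fintype.sum_prod_type]
    simp only [E, Fintype.sum_sigma, Fin.sum_univ_three]
    simp [e2]
    ring
  rw [← h1]
  unfold cnt
  symm
  refine Finset.card_bij (fun p _ => ({p.1, p.2} : Finset (subdivide dipole3 w).E)) ?_ ?_ ?_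
  · rintro ⟨e, f⟩ h
    simp only [mem_filter, mem_univ, true_and] at h
    have hne : e ≠ f := by rintro rfl; exact lt_irrefl _ h
    refine Finset.mem_filter.2 ⟨Finset.mem_univ _, ?_⟩
    exact ⟨Finset.card_pair hne, (sub_K_iff w e f hne).2 h.ne⟩
  · rintro ⟨e, f⟩ h ⟨e', f'⟩ h' hh
    simp only [mem_filter, mem_univ, true_and] at h h'
    obtain ⟨he, hf⟩ := pair_aux (α := (subdivide dipole3 w).E) hh
    change e = e' ∨ e = f' at he
    change f = e' ∨ f = f' at hf
    clear hh
    rcases he with rfl | rfl <;> rcases hf with rfl | rfl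
    · exact absurd h (lt_irrefl _)
    · rfl
    · exact absurd h (lt_asymm h')
    · exact absurd h (lt_irrefl _)
  · intro F hF
    have hF' : F.card = 2 ∧ K (subdivide dipole3 w) F := by
      simpa only [mem_filter, mem_univ, true_and] using hF
    obtain ⟨e, f, hef, rfl⟩ := Finset.card_eq_two.1 hF'.1
    have h := (sub_K_iff w e f hef).1 hF'.2
    rcases lt_or_gt_of_ne (α := Fin 3) h with h | h
    · exact ⟨(e, f), by simpa using h, rfl⟩
    · exact ⟨(f, e), by simpa using h, Finset.pair_comm (α := (subdivide dipole3 w).E) _ _⟩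

theorem sub_K_one (w : Fin 3 → ℕ) (hw : ∀ i j, i ≠ j → 0 < w i + w j)
    (e : (subdivide dipole3 w).E) : K (subdivide dipole3 w) {e} := by
  obtain ⟨i, a, ha, rfl⟩ := te_eta w e
  have : ∃ j, i ≠ j ∧ 0 < w j := by
    have hex : ∀ i : Fin 3, ∃ j j', i ≠ j ∧ i ≠ j' ∧ j ≠ j' := by decide
    obtain ⟨j, j', h1, h2, h3⟩ := hex i
    have := hw j j' h3
    rcases Nat.eq_zero_or_pos (w j) with h | h
    · exact ⟨j', h2, by omega⟩
    · exact ⟨j, h1, h⟩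
  obtain ⟨j, hj, hj'⟩ := this
  exact K_mono (by simp) (sub_K w hj ha hj')

theorem sub_K_zero (w : Fin 3 → ℕ) (hw : ∀ i j, i ≠ j → 0 < w i + w j) :
    K (subdivide dipole3 w) ∅ := by
  have := hw 0 1 (by decide)
  rcases Nat.eq_zero_or_pos (w 0) with h | h
  · exact K_mono (by simp) (sub_K_one w hw (te w 1 0 (by omega)))
  · exact K_mono (by simp) (sub_K_one w hw (te w 0 0 h))

theorem Joins.symm {H : Multigraph} {e : H.E} {x y : H.V} (h : Joins H e x y) : Joins H e y x :=
  Or.symm h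

theorem insert_model {H : Multigraph} {e f : H.E} {v y : H.V} (h : y ≠ v) (hfe : f ≠ e)
    {w : Fin 3 → ℕ} (M : Model (ctr H e v y h) w) (i0 : Fin 3) (k0 : ℕ) (hk0 : k0 < w i0)
    (hf : M.edge i0 k0 = ⟨f, hfe⟩) (e1 e2 : H.E)
    (h1 : Joins H e1 (M.node i0 k0).1 v) (h2 : Joins H e2 v (M.node i0 (k0 + 1)).1)
    (h12 : (e1 = e ∧ e2 = f) ∨ (e1 = f ∧ e2 = e))
    (hav : ∀ g, g ≠ e → g ≠ f → H.src g ≠ v ∧ H.tgt g ≠ v) :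
    ∃ w', Nonempty (Model H w') := by
  have hold : ∀ i k, k < w i → ¬ (i = i0 ∧ k = k0) →
      Joins H (M.edge i k).1 (M.node i k).1 (M.node i (k + 1)).1 := by
    intro i k hk hne
    have hgf : (M.edge i k).1 ≠ f := by
      intro hh
      have h3 : M.edge i k = M.edge i0 k0 := by rw [hf]; exact Subtype.ext hh
      have h4 := M.edge_bij.1 (a₁ := ⟨i, ⟨k, hk⟩⟩) (a₂ := ⟨i0, ⟨k0, hk0⟩⟩) h3
      obtain ⟨rfl, h5⟩ := Sigma.mk.inj_iff.1 h4
      have h6 := eq_of_heq h5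
      exact hne ⟨rfl, by simpa using h6⟩
    obtain ⟨hs, ht⟩ := hav _ (M.edge i k).2 hgf
    have hj := M.joins i k hk
    have hs' : ((ctr H e v y h).src (M.edge i k)).1 = H.src (M.edge i k).1 := by
      simp only [ctr]; rw [dif_neg hs]
    have ht' : ((ctr H e v y h).tgt (M.edge i k)).1 = H.tgt (M.edge i k).1 := by
      simp only [ctr]; rw [dif_neg ht]
    unfold Joins at hj ⊢
    rw [← hs', ← ht']
    rcases hj with ⟨h3, h4⟩ | ⟨h3, h4⟩
    · left; rw [h3, h4]; exact ⟨rfl, rfl⟩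
    · right; rw [h3, h4]; exact ⟨rfl, rfl⟩
  refine ⟨fun i => if i = i0 then w i + 1 else w i, ⟨?_⟩⟩
  refine
    { node := fun i k => if i = i0 ∧ k0 < k then (if k = k0 + 1 then v else (M.node i (k - 1)).1)
        else (M.node i k).1
      edge := fun i k => if i = i0 ∧ k0 ≤ k then (if k = k0 then e1 else if k = k0 + 1 then e2
        else (M.edge i (k - 1)).1) else (M.edge i k).1
      s := M.s.1
      t := M.t.1
      node_zero := ?_, node_last := ?_, joins := ?_, surjE := ?_, surjV := ?_
      sum_eq := ?_, pos := ?_ }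
  · intro i
    rw [if_neg (by omega), M.node_zero]
  · intro i
    by_cases hi : i = i0
    · subst hi
      simp only [if_true, true_and]
      rw [if_pos (by omega), if_neg (by omega), Nat.add_sub_cancel, M.node_last]
    · simp only [hi, if_false, false_and]
      rw [M.node_last]
  · intro i k hk
    by_cases hi : i = i0
    · subst hi
      simp only [if_true] at hk
      simp only [true_and]
      rcases lt_trichotomy k k0 with hlt | rfl | hgt
      · rw [if_neg (by omega), if_neg (by omega), if_neg (by omega)]
        exact hold i k (by omega) (by omega)
      · rw [if_pos le_rfl, if_pos rfl, if_neg (lt_irrefl _), if_pos (by omega), if_pos rfl]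
        exact h1
      · rw [if_pos (show k0 ≤ k by omega), if_neg (show ¬ k = k0 by omega),
          if_pos (show k0 < k by omega), if_pos (show k0 < k + 1 by omega)]
        by_cases hk1 : k = k0 + 1
        · subst hk1
          rw [if_pos rfl, if_pos rfl, if_neg (by omega), Nat.add_sub_cancel]
          exact h2
        · rw [if_neg hk1, if_neg hk1, if_neg (by omega)]
          obtain ⟨k, rfl⟩ : ∃ k', k = k' + 1 := ⟨k - 1, by omega⟩
          simp only [Nat.add_sub_cancel]
          exact hold i k (by omega) (by omega)
    · simp only [hi, if_false, false_and] at hk ⊢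
      exact hold i k hk (by simp [hi])
  · have hA : ∃ i k, (k < if i = i0 then w i + 1 else w i) ∧
        (if i = i0 ∧ k0 ≤ k then (if k = k0 then e1 else if k = k0 + 1 then e2
        else (M.edge i (k - 1)).1) else (M.edge i k).1) = e1 :=
      ⟨i0, k0, by simp; omega, by simp⟩
    have hB : ∃ i k, (k < if i = i0 then w i + 1 else w i) ∧
        (if i = i0 ∧ k0 ≤ k then (if k = k0 then e1 else if k = k0 + 1 then e2
        else (M.edge i (k - 1)).1) else (M.edge i k).1) = e2 :=
      ⟨i0, k0 + 1, by simp; omega, by simp⟩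
    intro g
    by_cases hg1 : g = e1
    · rw [hg1]; exact hA
    by_cases hg2 : g = e2
    · rw [hg2]; exact hB
    have hge : g ≠ e := by
      rcases h12 with ⟨h3, h4⟩ | ⟨h3, h4⟩
      · rwa [← h3]
      · rwa [← h4]
    have hgf : g ≠ f := by
      rcases h12 with ⟨h3, h4⟩ | ⟨h3, h4⟩
      · rwa [← h4]
      · rwa [← h3]
    obtain ⟨i, k, hk, hh⟩ := M.surjE ⟨g, hge⟩
    have hne : ¬ (i = i0 ∧ k = k0) := by
      rintro ⟨rfl, rfl⟩
      rw [hf] at hh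
      exact hgf (congrArg Subtype.val hh).symm
    by_cases hi : i = i0 ∧ k0 ≤ k
    · obtain ⟨rfl, hi2⟩ := hi
      have : k ≠ k0 := fun h => hne ⟨rfl, h⟩
      refine ⟨i, k + 1, by simp; omega, ?_⟩
      rw [if_pos ⟨rfl, by omega⟩, if_neg (by omega), if_neg (by omega), Nat.add_sub_cancel, hh]
    · refine ⟨i, k, by split_ifs <;> omega, ?_⟩
      rw [if_neg hi, hh]
  · intro u
    by_cases hu : u = v
    · exact ⟨i0, k0 + 1, by simp; omega, by simp [hu]⟩
    · obtain ⟨i, k, hk, hh⟩ := M.surjV ⟨u, hu⟩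
      by_cases hi : i = i0 ∧ k0 < k
      · obtain ⟨rfl, hi2⟩ := hi
        refine ⟨i, k + 1, by simp; omega, ?_⟩
        rw [if_pos ⟨rfl, by omega⟩, if_neg (by omega), Nat.add_sub_cancel, hh]
      · refine ⟨i, k, by split_ifs <;> omega, ?_⟩
        rw [if_neg hi, hh]
  · have h3 := M.sum_eq
    have h4 := ctr_nE H e v y h
    rw [← h4, ← h3]
    have hc : ∀ i : Fin 3, i = 0 ∨ i = 1 ∨ i = 2 := by decide
    rcases hc i0 with rfl | rfl | rfl <;> simp <;> omega
  · intro i j hij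
    have := M.pos i j hij
    split_ifs <;> omega

def inc (H : Multigraph) (v : H.V) : Finset H.E :=
  Finset.univ.filter fun e => (H.src e = v ∧ H.tgt e ≠ v) ∨ (H.src e ≠ v ∧ H.tgt e = v)

def lps (H : Multigraph) (v : H.V) : Finset H.E :=
  Finset.univ.filter fun e => H.src e = v ∧ H.tgt e = v

theorem sum_inc (H : Multigraph) : ∑ v : H.V, ((inc H v).card + 2 * (lps H v).card) = 2 * H.nE := by
  have h1 : ∀ v, (inc H v).card + 2 * (lps H v).card =
      (Finset.univ.filter fun e => H.src e = v).card +
        (Finset.univ.filter fun e => H.tgt e = v).card := by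
    intro v
    unfold inc lps
    simp only [Finset.card_filter, Finset.mul_sum]
    rw [← Finset.sum_add_distrib, ← Finset.sum_add_distrib]
    refine Finset.sum_congr rfl fun e _ => ?_
    by_cases h1 : H.src e = v <;> by_cases h2 : H.tgt e = v <;> simp [h1, h2]
  have h2 : ∀ g : H.E → H.V, ∑ v : H.V, (Finset.univ.filter fun e => g e = v).card = H.nE := by
    intro g
    exact (Finset.card_eq_sum_card_fiberwise (f := g) (s := Finset.univ) (t := Finset.univ)
      (by intro x _; simp)).symm
  simp only [h1, Finset.sum_add_distrib, h2]
  ring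

theorem two_le_inc (H : Multigraph) (hV : 2 ≤ H.nV) (hK : K H ∅) (hb : ∀ e, K H {e}) (v : H.V) :
    2 ≤ (inc H v).card := by
  obtain ⟨u, hu⟩ : ∃ u, u ≠ v := by
    have : 1 < Fintype.card H.V := hV
    exact Fintype.exists_ne_of_one_lt_card this v
  by_contra hlt
  have hcut : ∀ F : Finset H.E, inc H v ⊆ F → ¬ K H F := by
    intro F hF hKF
    refine hu (hKF (fun x => x = v) ?_ v u rfl)
    intro e he
    have : e ∉ inc H v := fun h => he (hF h)
    simp only [inc, mem_filter, mem_univ, true_and] at this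
    tauto
  rcases Nat.eq_zero_or_pos (inc H v).card with h | h
  · rw [Finset.card_eq_zero] at h
    exact hcut ∅ (by rw [h]) hK
  · obtain ⟨e, he⟩ := Finset.card_eq_one.1 (show (inc H v).card = 1 by omega)
    exact hcut {e} (by rw [he]) (hb e)

theorem model_one (H : Multigraph) (hV : H.nV = 1) (hE : H.nE = 2) :
    ∃ w, Nonempty (Model H w) := by
  have hV' : Fintype.card H.V = 1 := hV
  have hE' : Fintype.card H.E = 2 := hE
  obtain ⟨v, hv⟩ := Fintype.card_eq_one_iff.1 hV'
  let σ := Fintype.equivFinOfCardEq hE'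
  refine ⟨![1, 1, 0], ⟨?_⟩⟩
  refine
    { node := fun _ _ => v
      edge := fun i _ => σ.symm (if i = 0 then 0 else 1)
      s := v
      t := v
      node_zero := fun _ => rfl, node_last := fun _ => rfl, joins := ?_, surjE := ?_, surjV := ?_
      sum_eq := ?_, pos := ?_ }
  · intro i k _
    exact Or.inl ⟨hv _, hv _⟩
  · intro e
    have h2 : ∀ u : Fin 2, u = 0 ∨ u = 1 := by decide
    rcases h2 (σ e) with h | h
    · exact ⟨0, 0, by simp, by rw [if_pos rfl, ← h]; simp⟩
    · exact ⟨1, 0, by simp, by rw [if_neg (by decide), ← h]; simp⟩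
  · intro u
    exact ⟨0, 0, by simp, (hv u).symm⟩
  · rw [hE]; rfl
  · decide

theorem model_two (H : Multigraph) (hV : H.nV = 2) (hE : H.nE = 3)
    (hl : ∀ e, H.src e ≠ H.tgt e) : ∃ w, Nonempty (Model H w) := by
  have hV' : Fintype.card H.V = 2 := hV
  have hE' : Fintype.card H.E = 3 := hE
  let τ := Fintype.equivFinOfCardEq hV'
  let σ := Fintype.equivFinOfCardEq hE'
  have h2 : ∀ u : Fin 2, u = 0 ∨ u = 1 := by decide
  have h3 : ∀ u : H.V, u = τ.symm 0 ∨ u = τ.symm 1 := by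
    intro u
    rcases h2 (τ u) with h | h
    · left; rw [← h]; simp
    · right; rw [← h]; simp
  refine ⟨fun _ => 1, ⟨?_⟩⟩
  refine
    { node := fun _ k => if k = 0 then τ.symm 0 else τ.symm 1
      edge := fun i _ => σ.symm i
      s := τ.symm 0
      t := τ.symm 1
      node_zero := fun _ => rfl, node_last := fun _ => rfl, joins := ?_, surjE := ?_, surjV := ?_
      sum_eq := ?_, pos := ?_ }
  · intro i k hk
    have : k = 0 := by omega
    subst this
    have hne := hl (σ.symm i)
    unfold Joins
    rcases h3 (H.src (σ.symm i)) with h | h <;> rcases h3 (H.tgt (σ.symm i)) with h' | h'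
    · exact absurd (h.trans h'.symm) hne
    · left; exact ⟨h, h'⟩
    · right; exact ⟨h, h'⟩
    · exact absurd (h.trans h'.symm) hne
  · intro e
    exact ⟨σ e, 0, by omega, by simp⟩
  · intro u
    rcases h3 u with h | h
    · exact ⟨0, 0, by omega, h.symm⟩
    · exact ⟨0, 1, by omega, h.symm⟩
  · rw [hE]
  · intros; omega

theorem joins_of_inc {H : Multigraph} {v : H.V} {e : H.E} (h : e ∈ inc H v) :
    ∃ y, y ≠ v ∧ Joins H e v y := by
  simp only [inc, mem_filter, mem_univ, true_and] at h
  rcases h with ⟨h1, h2⟩ | ⟨h1, h2⟩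
  · exact ⟨_, h2, Or.inl ⟨h1, rfl⟩⟩
  · exact ⟨_, h1, Or.inr ⟨rfl, h2⟩⟩

theorem exists_model : ∀ (n : ℕ) (H : Multigraph), H.nV = n + 1 → H.nE = n + 2 → K H ∅ →
    (∀ e, K H {e}) → ∃ w, Nonempty (Model H w) := by
  intro n
  induction n with
  | zero => intro H hV hE _ _; exact model_one H hV hE
  | succ n ih =>
    intro H hV hE hK hb
    have h2 := two_le_inc H (by omega) hK hb
    by_cases hd : ∃ v, (inc H v).card = 2 ∧ (lps H v).card = 0
    · obtain ⟨v, hv, hl⟩ := hd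
      obtain ⟨e, f, hef, hN⟩ := Finset.card_eq_two.1 hv
      obtain ⟨y, hy, hje⟩ := joins_of_inc (show e ∈ inc H v by rw [hN]; simp)
      obtain ⟨z, hz, hjf⟩ := joins_of_inc (show f ∈ inc H v by rw [hN]; simp)
      have hav : ∀ g, g ≠ e → g ≠ f → H.src g ≠ v ∧ H.tgt g ≠ v := by
        intro g h1 h2
        have h3 : g ∉ inc H v := by rw [hN]; simp [h1, h2]
        have h4 : g ∉ lps H v := by rw [Finset.card_eq_zero.1 hl]; simp
        simp only [inc, lps, mem_filter, mem_univ, true_and] at h3 h4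
        tauto
      have hV' := ctr_nV H e v y hy
      have hE' := ctr_nE H e v y hy
      obtain ⟨w, ⟨M⟩⟩ := ih (ctr H e v y hy) (by omega) (by omega)
        (ctr_K hy hje (F := ∅) (by simp) hK)
        (fun g => ctr_K hy hje (F := {g.1}) (by
          intro g' hg'
          rw [Finset.mem_singleton] at hg' ⊢
          rw [hg']) (hb g.1))
      obtain ⟨i0, k0, hk0, hf⟩ := M.surjE ⟨f, hef.symm⟩
      have hj := M.joins i0 k0 hk0
      rw [hf] at hj
      -- endpoints of f in the contraction
      have hfj : ((M.node i0 k0).1 = y ∧ (M.node i0 (k0 + 1)).1 = z) ∨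
          ((M.node i0 k0).1 = z ∧ (M.node i0 (k0 + 1)).1 = y) := by
        unfold Joins at hj
        simp only [ctr] at hj
        rcases hjf with ⟨h3, h4⟩ | ⟨h3, h4⟩ <;> simp only [h3, h4, hz, dite_true, dite_false] at hj <;>
          rcases hj with ⟨h5, h6⟩ | ⟨h5, h6⟩ <;> rw [← h5, ← h6] <;> simp
      rcases hfj with ⟨h3, h4⟩ | ⟨h3, h4⟩
      · exact insert_model hy hef.symm M i0 k0 hk0 hf e f (by rw [h3]; exact hje.symm)
          (by rw [h4]; exact hjf) (Or.inl ⟨rfl, rfl⟩) hav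
      · exact insert_model hy hef.symm M i0 k0 hk0 hf f e (by rw [h3]; exact hjf.symm)
          (by rw [h4]; exact hje) (Or.inr ⟨rfl, rfl⟩) hav
    · push Not at hd
      have h3 : ∀ v, 3 ≤ (inc H v).card + 2 * (lps H v).card := by
        intro v
        have := h2 v
        have := hd v
        omega
      have h4 := sum_inc H
      have h5 : ∑ _v : H.V, 3 ≤ ∑ v : H.V, ((inc H v).card + 2 * (lps H v).card) :=
        Finset.sum_le_sum fun v _ => h3 v
      have h6 : ∑ _v : H.V, 3 = 3 * H.nV := by simp [Multigraph.nV, mul_comm]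
      have hn : n = 0 := by omega
      subst hn
      refine model_two H hV hE ?_
      intro e he
      have hpos : 0 < (lps H (H.src e)).card := by
        rw [Finset.card_pos]
        exact ⟨e, by simp [lps, he]⟩
      have h7 := h2 (H.src e)
      have h8 : ∑ _v : H.V, 3 < ∑ v : H.V, ((inc H v).card + 2 * (lps H v).card) :=
        Finset.sum_lt_sum (fun v _ => h3 v) ⟨H.src e, Finset.mem_univ _, by omega⟩
      omega

def bal (m : ℕ) : Fin 3 → ℕ := fun i => (m + i.val) / 3

theorem bal_sum (m : ℕ) : bal m 0 + bal m 1 + bal m 2 = m := by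
  simp only [bal, Fin.val_zero, Fin.val_one, Fin.val_two]; omega

theorem bal_balanced (m : ℕ) : BalancedWeights (bal m) := by
  intro i j
  simp only [bal]
  have := i.2
  have := j.2
  omega

theorem bal_pos (m : ℕ) (hm : 2 ≤ m) : ∀ i j, i ≠ j → 0 < bal m i + bal m j := by
  intro i j hij
  simp only [bal]
  have h1 := i.2
  have h2 := j.2
  have : i.val ≠ j.val := fun h => hij (Fin.ext h)
  omega

theorem bal_mono (m : ℕ) : e2 (bal m) ≤ e2 (bal (m + 1)) := by
  have h : ∀ i, bal m i ≤ bal (m + 1) i := fun i => Nat.div_le_div_right (by omega)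
  unfold e2
  exact Nat.add_le_add (Nat.add_le_add (Nat.mul_le_mul (h _) (h _)) (Nat.mul_le_mul (h _) (h _)))
    (Nat.mul_le_mul (h _) (h _))

theorem balanced_iff (w : Fin 3 → ℕ) : BalancedWeights w ↔
    (w 0 ≤ w 1 + 1 ∧ w 0 ≤ w 2 + 1 ∧ w 1 ≤ w 0 + 1 ∧ w 1 ≤ w 2 + 1 ∧ w 2 ≤ w 0 + 1 ∧ w 2 ≤ w 1 + 1) := by
  unfold BalancedWeights
  simp only [Fin.forall_fin_succ]
  simp
  tauto

theorem sq_aux (d : ℤ) : 0 ≤ d * (d - 1) ∧ (d * (d - 1) = 0 ↔ (0 ≤ d ∧ d ≤ 1)) := by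
  constructor
  · rcases le_or_gt d 0 with h | h
    · nlinarith
    · exact mul_nonneg (by omega) (by omega)
  · rw [mul_eq_zero]; omega

theorem e2_identity (w : Fin 3 → ℕ) (q r : ℕ) (h : w 0 + w 1 + w 2 = 3 * q + r) :
    2 * (e2 w : ℤ) = 6 * q ^ 2 + 4 * q * r + r ^ 2 - r -
      (((w 0 : ℤ) - q) * ((w 0 : ℤ) - q - 1) + ((w 1 : ℤ) - q) * ((w 1 : ℤ) - q - 1) +
        ((w 2 : ℤ) - q) * ((w 2 : ℤ) - q - 1)) := by
  have h' : (w 0 : ℤ) = 3 * q + r - w 1 - w 2 := by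
    have : ((w 0 + w 1 + w 2 : ℕ) : ℤ) = ((3 * q + r : ℕ) : ℤ) := by rw [h]
    push_cast at this
    linarith
  unfold e2
  push_cast
  rw [h']
  ring

theorem bal_zero_one (w : Fin 3 → ℕ) (q r : ℕ) (hr : r < 3) (h : w 0 + w 1 + w 2 = 3 * q + r) :
    BalancedWeights w ↔ ((0 ≤ (w 0 : ℤ) - q ∧ (w 0 : ℤ) - q ≤ 1) ∧
      (0 ≤ (w 1 : ℤ) - q ∧ (w 1 : ℤ) - q ≤ 1) ∧ (0 ≤ (w 2 : ℤ) - q ∧ (w 2 : ℤ) - q ≤ 1)) := by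
  rw [balanced_iff]
  omega

theorem e2_max (m : ℕ) (w : Fin 3 → ℕ) (h : w 0 + w 1 + w 2 = m) :
    e2 w ≤ e2 (bal m) ∧ (e2 w = e2 (bal m) ↔ BalancedWeights w) := by
  obtain ⟨q, r, hr, hm⟩ : ∃ q r, r < 3 ∧ m = 3 * q + r :=
    ⟨m / 3, m % 3, Nat.mod_lt _ (by omega), by omega⟩
  have i1 := e2_identity w q r (by omega)
  have i2 := e2_identity (bal m) q r (by rw [bal_sum]; exact hm)
  have b1 := bal_zero_one w q r hr (by omega)
  have b2 := (bal_zero_one (bal m) q r hr (by rw [bal_sum]; exact hm)).1 (bal_balanced m)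
  have s0 := sq_aux ((w 0 : ℤ) - q)
  have s1 := sq_aux ((w 1 : ℤ) - q)
  have s2 := sq_aux ((w 2 : ℤ) - q)
  have t0 := (sq_aux ((bal m 0 : ℤ) - q)).2.2 b2.1
  have t1 := (sq_aux ((bal m 1 : ℤ) - q)).2.2 b2.2.1
  have t2 := (sq_aux ((bal m 2 : ℤ) - q)).2.2 b2.2.2
  rw [t0, t1, t2] at i2
  rw [b1, ← s0.2, ← s1.2, ← s2.2]
  generalize ((w 0 : ℤ) - q) * ((w 0 : ℤ) - q - 1) = A at *
  generalize ((w 1 : ℤ) - q) * ((w 1 : ℤ) - q - 1) = B at *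
  generalize ((w 2 : ℤ) - q) * ((w 2 : ℤ) - q - 1) = C at *
  have a0 := s0.1
  have a1 := s1.1
  have a2 := s2.1
  generalize (6 * (q : ℤ) ^ 2 + 4 * q * r + r ^ 2 - r) = D at *
  constructor
  · omega
  · constructor
    · intro h; omega
    · intro h; omega

theorem sort_bal (m : ℕ) (w : Fin 3 → ℕ) (h : w 0 + w 1 + w 2 = m) (hb : BalancedWeights w) :
    ∃ σ : Equiv.Perm (Fin 3), w ∘ σ = bal m := by
  refine ⟨Tuple.sort w, ?_⟩
  have hm := Tuple.monotone_sort w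
  set u := w ∘ Tuple.sort w with hu
  have hs : u 0 + u 1 + u 2 = m := by
    rw [← h, ← Fin.sum_univ_three, ← Fin.sum_univ_three]
    exact Equiv.sum_comp (Tuple.sort w) w
  have hb' : BalancedWeights u := fun i j => hb _ _
  rw [balanced_iff] at hb'
  have h01 : u 0 ≤ u 1 := hm (by decide)
  have h12 : u 1 ≤ u 2 := hm (by decide)
  funext i
  have hc : ∀ i : Fin 3, i = 0 ∨ i = 1 ∨ i = 2 := by decide
  rcases hc i with rfl | rfl | rfl <;> simp only [bal, Fin.val_zero, Fin.val_one, Fin.val_two] <;>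
    omega

theorem cnt2_le : ∀ (n : ℕ) (H : Multigraph), H.nV = n + 1 → H.nE = n + 2 → K H ∅ →
    cnt H 2 ≤ e2 (bal (n + 2)) := by
  intro n
  induction n with
  | zero =>
    intro H hV hE hK
    obtain ⟨w, ⟨M⟩⟩ := model_one H hV hE
    obtain ⟨I⟩ := M.iso (by omega)
    rw [← cnt_iso I, sub_cnt2]
    exact (e2_max _ w (by rw [M.sum_eq, hE])).1
  | succ n ih =>
    intro H hV hE hK
    by_cases hb : ∀ e, K H {e}
    · obtain ⟨w, ⟨M⟩⟩ := exists_model (n + 1) H hV hE hK hb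
      obtain ⟨I⟩ := M.iso (by omega)
      rw [← cnt_iso I, sub_cnt2]
      exact (e2_max _ w (by rw [M.sum_eq, hE])).1
    · push Not at hb
      obtain ⟨e, he⟩ := hb
      have hne : H.tgt e ≠ H.src e := by
        intro hl
        apply he
        intro φ hφ
        refine hK φ ?_
        intro g _
        by_cases hg : g = e
        · rw [hg, hl]
        · exact hφ g (by simpa using hg)
      have hj : Joins H e (H.src e) (H.tgt e) := Or.inl ⟨rfl, rfl⟩
      have h1 := ctr_nV H e _ _ hne
      have h2 := ctr_nE H e _ _ hne
      exact (cnt_ctr_le hne hj he 2).trans ((ih _ (by omega) (by omega)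
        (ctr_K hne hj (F := ∅) (by simp) hK)).trans (bal_mono _))

theorem rel_lt {n m : ℕ} (hm : m = n + 1) (hn : 1 ≤ n) (H : Multigraph) (hH : memG H n m)
    (hiso : ¬ IsIso (subdivide dipole3 (bal m)) H) (p : ℝ) (hp : 0 < p) (hp1 : p < 1) :
    H.rel p < p ^ m + (m : ℝ) * p ^ (m - 1) * (1 - p) +
      ((e2 (bal m) : ℕ) : ℝ) * p ^ (m - 2) * (1 - p) ^ 2 := by
  obtain ⟨hV, hE, hC⟩ := hH
  have hK : K H ∅ := by rw [K_iff, Finset.sdiff_empty]; exact hC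
  have : Nonempty H.V := Fintype.card_pos_iff.1 (show 0 < H.nV by omega)
  rw [rel_eq' H (by omega) hK, hE]
  have hq : 0 < 1 - p := by linarith
  have hA : 0 < p ^ (m - 1) * (1 - p) := by positivity
  have hB : 0 < p ^ (m - 2) * (1 - p) ^ 2 := by positivity
  obtain ⟨n, rfl⟩ : ∃ n', n = n' + 1 := ⟨n - 1, by omega⟩
  subst hm
  have hc2 := cnt2_le n H hV hE hK
  have hc1 := cnt_one_le H
  rw [hE] at hc1
  have key : (cnt H 1 < n + 1 + 1 ∨ cnt H 2 < e2 (bal (n + 2))) := by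
    by_cases hb : ∀ e, K H {e}
    · right
      obtain ⟨w, ⟨M⟩⟩ := exists_model n H hV hE hK hb
      obtain ⟨I⟩ := M.iso (by omega)
      have hs : w 0 + w 1 + w 2 = n + 2 := by rw [M.sum_eq, hE]
      have hmax := e2_max _ w hs
      rw [← cnt_iso I, sub_cnt2]
      refine lt_of_le_of_ne hmax.1 fun heq => hiso ?_
      obtain ⟨σ, hσ⟩ := sort_bal _ w hs (hmax.2.1 heq)
      have M' := M.perm σ
      rw [hσ] at M'
      exact M'.iso (by omega)
    · left
      push Not at hb
      obtain ⟨e, he⟩ := hb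
      have := cnt_one_lt H e he
      omega
  have r1 : (cnt H 1 : ℝ) ≤ ((n + 1 + 1 : ℕ) : ℝ) := by exact_mod_cast hc1
  have r2 : (cnt H 2 : ℝ) ≤ ((e2 (bal (n + 2)) : ℕ) : ℝ) := by exact_mod_cast hc2
  have m1 := mul_le_mul_of_nonneg_right r1 hA.le
  have m2 := mul_le_mul_of_nonneg_right r2 hB.le
  rcases key with hk | hk
  · have r1' : (cnt H 1 : ℝ) < ((n + 1 + 1 : ℕ) : ℝ) := by exact_mod_cast hk
    have m1' := mul_lt_mul_of_pos_right r1' hA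
    simp only [← mul_assoc] at *
    linarith
  · have r2' : (cnt H 2 : ℝ) < ((e2 (bal (n + 2)) : ℕ) : ℝ) := by exact_mod_cast hk
    have m2' := mul_lt_mul_of_pos_right r2' hB
    simp only [← mul_assoc] at *
    linarith

theorem rel_bal (m : ℕ) (hm : 2 ≤ m) (p : ℝ) : (subdivide dipole3 (bal m)).rel p =
    p ^ m + (m : ℝ) * p ^ (m - 1) * (1 - p) +
      ((e2 (bal m) : ℕ) : ℝ) * p ^ (m - 2) * (1 - p) ^ 2 := by
  have hE := sub_nE (bal m)
  have hV := sub_nV (bal m) (bal_pos m hm)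
  rw [bal_sum] at hE hV
  have : Nonempty (subdivide dipole3 (bal m)).V :=
    Fintype.card_pos_iff.1 (show 0 < (subdivide dipole3 (bal m)).nV by omega)
  rw [rel_eq' _ (by omega) (sub_K_zero _ (bal_pos m hm)),
    cnt_one_eq _ (sub_K_one _ (bal_pos m hm)), sub_cnt2, hE]

end Theta

/-- for m = n + 1 the balanced θ-graph (balanced weak subdivision of the
3-dipole) is uniquely optimal; its reliability is the displayed polynomial, and the
coefficient ℓ₁ℓ₂ + ℓ₁ℓ₃ + ℓ₂ℓ₃ is maximized exactly at balanced chain lengths. -/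
theorem balanced_theta_uniquely_optimal (n m : ℕ) (hn : 1 ≤ n) (hm : m = n + 1) :
    ∃ (G : Multigraph) (w : Fin 3 → ℕ),
      IsWeakSubdivision G dipole3 w ∧ (w 0 + w 1 + w 2 = m) ∧ BalancedWeights w ∧
      UniquelyOptimal G n m ∧
      (∀ p : ℝ, 0 < p → p < 1 →
        G.rel p = p ^ m + (m : ℝ) * p ^ (m - 1) * (1 - p) +
          ((w 0 * w 1 + w 0 * w 2 + w 1 * w 2 : ℕ) : ℝ) * p ^ (m - 2) * (1 - p) ^ 2) ∧
      (∀ w' : Fin 3 → ℕ, w' 0 + w' 1 + w' 2 = m →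
        (w' 0 * w' 1 + w' 0 * w' 2 + w' 1 * w' 2 ≤
            w 0 * w 1 + w 0 * w 2 + w 1 * w 2) ∧
        (w' 0 * w' 1 + w' 0 * w' 2 + w' 1 * w' 2 =
            w 0 * w 1 + w 0 * w 2 + w 1 * w 2 ↔ BalancedWeights w')) := by
  have hm2 : 2 ≤ m := by omega
  refine ⟨subdivide dipole3 (Theta.bal m), Theta.bal m,
    ⟨Theta.zeroAcyclic _ (Theta.bal_pos m hm2),
      ⟨⟨Equiv.refl _, Equiv.refl _, fun e => Or.inl ⟨rfl, rfl⟩⟩⟩⟩,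
    Theta.bal_sum m, Theta.bal_balanced m, ⟨⟨?_, ?_, ?_⟩, ?_⟩, ?_, ?_⟩
  · have := Theta.sub_nV _ (Theta.bal_pos m hm2)
    rw [Theta.bal_sum] at this
    omega
  · rw [Theta.sub_nE, Theta.bal_sum]
  · have := (Theta.K_iff _ _).1 (Theta.sub_K_zero _ (Theta.bal_pos m hm2))
    rw [Finset.sdiff_empty] at this
    exact this
  · intro H hH hiso p hp hp1
    rw [Theta.rel_bal m hm2]
    exact Theta.rel_lt hm hn H hH hiso p hp hp1
  · intro p _ _
    exact Theta.rel_bal m hm2 p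
  · intro w' hw'
    exact Theta.e2_max m w' hw'
end
end
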